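/- arXiv:1801.07179 — 11 statements merged into one kernel-verified Lean document; each statement's English description precedes it below -/
import Mathlib

section
/- Every Newman quadrinomial X^a + X^b + X^c + 1 with integers 0 < c < b < a ≤ 15, except possibly for the eight quadrinomials X^15+X^14+X^10+1, X^15+X^12+X^10+1, X^15+X^12+X^4+1, X^15+X^8+X^6+1 and their reciprocals X^15+X^5+X+1, X^15+X^5+X^3+1 (i.e. X^15+X^5+X^3+1 written with exponents (5,3)), X^15+X^11+X^3+1, X^15+X^9+X^7+1, divides some Littlewood polynomial. -/
open Polynomial

/-- A Littlewood polynomial: a nonzero integer polynomial all of whose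
coefficients (up to its degree) are `-1` or `1`. -/
def IsLittlewood (P : Polynomial ℤ) : Prop :=
  P ≠ 0 ∧ ∀ i ≤ P.natDegree, P.coeff i = 1 ∨ P.coeff i = -1

/-!
Let `P = X ^ a + X ^ b + X ^ c + 1`. A multiple `P * Q` of degree `n` can only be Littlewood if it
is congruent to `1 + X + ⋯ + X ^ n` modulo `2`; this determines `Q` modulo `2`, and it is solvable
as soon as `X ^ (n + 1) ≡ 1` modulo `2` and `(X + 1) * P`. Look for `Q` with coefficients in
`{-1, 0, 1}`, that is `Q = U - V` where `U` and `V` are Newman polynomials without common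
exponents: `U + V` is given, and each coefficient of `P * Q` is a sum of one or three signs. So all
of these are `±1` if and only if no exponent occurs three times in `P * U` or in `P * V`. A local
search finds such a partition of the exponents of `U + V` for every quadrinomial of degree at
most `15`.

A finite set of exponents is represented by the binary digits of a natural number, so that bitwise
operations treat all exponents at once.
-/

theorem isLittlewood_of_coeff {L : ℤ[X]} {n : ℕ}
    (hle : ∀ i ≤ n, L.coeff i = 1 ∨ L.coeff i = -1) (hgt : ∀ i, n < i → L.coeff i = 0) :
    IsLittlewood L := by
  have hdeg : L.natDegree ≤ n := natDegree_le_iff_coeff_eq_zero.mpr hgt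
  refine ⟨?_, fun i hi => hle i (hi.trans hdeg)⟩
  rintro rfl
  simpa using hle 0 n.zero_le

section Quadrinomial

/-- The quadrinomial with the given exponents. All four exponents are arguments, so that they play
symmetric roles; the Newman quadrinomials are those with `s = 0`. -/
noncomputable def quadrinomial (p q r s : ℕ) : ℤ[X] :=
  X ^ p + X ^ q + X ^ r + X ^ s

/-- The polynomial with coefficients `0` and `1` whose exponents are the positions of the binary
digits `1` of `u`. -/
noncomputable def binaryPolynomial (u : ℕ) : ℤ[X] :=
  ∑ i ∈ u.bitIndices.toFinset, X ^ i

/-- The exponents with a nonzero coefficient in `quadrinomial p q r s * binaryPolynomial u`. -/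
def productExponents (p q r s u : ℕ) : ℕ :=
  u <<< p ||| u <<< q ||| u <<< r ||| u <<< s

/-- The exponents with an odd coefficient in `quadrinomial p q r s * binaryPolynomial u`, which
is to say multiplication by `quadrinomial p q r s` over the field with two elements. -/
def oddExponents (p q r s u : ℕ) : ℕ :=
  u <<< p ^^^ u <<< q ^^^ u <<< r ^^^ u <<< s

/-- The exponents with coefficient at least `3` in
`quadrinomial p q r s * binaryPolynomial u`. Almost all the time of the search below is spent here,
and kernel evaluation is several times faster on `Nat.land`, `Nat.lor`, … than on the notations for
them. -/
def tripleExponents (p q r s u : ℕ) : ℕ :=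
  (((u.shiftLeft p).land (u.shiftLeft q)).land ((u.shiftLeft r).lor (u.shiftLeft s))).lor
    (((u.shiftLeft r).land (u.shiftLeft s)).land ((u.shiftLeft p).lor (u.shiftLeft q)))

variable (p q r s u i : ℕ)

theorem coeff_binaryPolynomial :
    (binaryPolynomial u).coeff i = (u.testBit i).toNat := by
  cases h : u.testBit i <;> simp [binaryPolynomial, finsetSum_coeff, coeff_X_pow, h]

theorem coeff_X_pow_mul_binaryPolynomial :
    (X ^ p * binaryPolynomial u).coeff i = (((u <<< p).testBit i).toNat : ℤ) := by
  rw [coeff_X_pow_mul', Nat.testBit_shiftLeft]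
  split_ifs with h <;> simp [coeff_binaryPolynomial, h]

theorem coeff_quadrinomial_mul_binaryPolynomial :
    (quadrinomial p q r s * binaryPolynomial u).coeff i =
      ((u <<< p).testBit i).toNat + ((u <<< q).testBit i).toNat +
        ((u <<< r).testBit i).toNat + ((u <<< s).testBit i).toNat := by
  simp only [quadrinomial, add_mul, coeff_add, coeff_X_pow_mul_binaryPolynomial]

theorem coeff_quadrinomial_mul_binaryPolynomial_nonneg :
    0 ≤ (quadrinomial p q r s * binaryPolynomial u).coeff i := by
  rw [coeff_quadrinomial_mul_binaryPolynomial]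
  positivity

theorem testBit_productExponents :
    (productExponents p q r s u).testBit i = true ↔
      (quadrinomial p q r s * binaryPolynomial u).coeff i ≠ 0 := by
  rw [coeff_quadrinomial_mul_binaryPolynomial]
  simp only [productExponents, Nat.testBit_or]
  generalize (u <<< p).testBit i = x, (u <<< q).testBit i = y, (u <<< r).testBit i = z,
    (u <<< s).testBit i = t
  revert x y z t
  decide

theorem testBit_oddExponents :
    (oddExponents p q r s u).testBit i = true ↔
      Odd ((quadrinomial p q r s * binaryPolynomial u).coeff i) := by
  rw [coeff_quadrinomial_mul_binaryPolynomial]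
  simp only [oddExponents, Nat.testBit_xor]
  generalize (u <<< p).testBit i = x, (u <<< q).testBit i = y, (u <<< r).testBit i = z,
    (u <<< s).testBit i = t
  revert x y z t
  decide

theorem testBit_tripleExponents :
    (tripleExponents p q r s u).testBit i = true ↔
      3 ≤ (quadrinomial p q r s * binaryPolynomial u).coeff i := by
  rw [coeff_quadrinomial_mul_binaryPolynomial]
  simp only [tripleExponents, Nat.land_eq, Nat.lor_eq, Nat.shiftLeft_eq', Nat.testBit_or,
    Nat.testBit_and]
  generalize (u <<< p).testBit i = x, (u <<< q).testBit i = y, (u <<< r).testBit i = z,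
    (u <<< s).testBit i = t
  revert x y z t
  decide

end Quadrinomial

section Splitting

variable {p q r s u v : ℕ}

/-- The polynomial `binaryPolynomial u - binaryPolynomial v` is recognized as a cofactor of
`quadrinomial p q r s` in a Littlewood polynomial: modulo `2` the product is
`1 + X + ⋯ + X ^ n` for some `n`, and no three equal signs meet in any of its coefficients. -/
def IsSignedCofactor (p q r s u v : ℕ) : Prop :=
  let m := oddExponents p q r s u ^^^ oddExponents p q r s v
  m ≠ 0 ∧ (m + 1).isPowerOfTwo ∧
    productExponents p q r s u ≤ m ∧ productExponents p q r s v ≤ m ∧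
    tripleExponents p q r s u = 0 ∧ tripleExponents p q r s v = 0

instance : Decidable (IsSignedCofactor p q r s u v) := by
  unfold IsSignedCofactor
  infer_instance

theorem coeff_eq_zero_of_productExponents_lt {n i : ℕ}
    (h : productExponents p q r s u < 2 ^ n) (hi : n ≤ i) :
    (quadrinomial p q r s * binaryPolynomial u).coeff i = 0 := by
  by_contra hne
  rw [← ne_eq, ← testBit_productExponents,
    Nat.testBit_lt_two_pow (h.trans_le (Nat.pow_le_pow_right two_pos hi))] at hne
  contradiction

theorem coeff_lt_three_of_tripleExponents_eq_zero (h : tripleExponents p q r s u = 0) (i : ℕ) :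
    (quadrinomial p q r s * binaryPolynomial u).coeff i < 3 := by
  rw [← not_le, ← testBit_tripleExponents, h]
  simp

theorem odd_coeff_sub_of_testBit_xor {i : ℕ}
    (h : (oddExponents p q r s u ^^^ oddExponents p q r s v).testBit i = true) :
    Odd ((quadrinomial p q r s * (binaryPolynomial u - binaryPolynomial v)).coeff i) := by
  rw [Nat.testBit_xor] at h
  rw [mul_sub, coeff_sub, Int.odd_sub, ← Int.not_odd_iff_even, ← testBit_oddExponents,
    ← testBit_oddExponents]
  grind

theorem IsSignedCofactor.isLittlewood (h : IsSignedCofactor p q r s u v) :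
    IsLittlewood (quadrinomial p q r s * (binaryPolynomial u - binaryPolynomial v)) := by
  obtain ⟨hm, ⟨k, hk⟩, hu, hv, hu₃, hv₃⟩ := h
  obtain ⟨n, rfl⟩ : ∃ n, k = n + 1 :=
    Nat.exists_eq_add_one_of_ne_zero (by rintro rfl; simp_all)
  refine isLittlewood_of_coeff (n := n) (fun i hi => ?_) (fun i hi => ?_)
  · have hodd : Odd ((quadrinomial p q r s *
        (binaryPolynomial u - binaryPolynomial v)).coeff i) := by
      refine odd_coeff_sub_of_testBit_xor ?_
      rw [Nat.eq_sub_of_add_eq hk, Nat.testBit_two_pow_sub_one]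
      simpa using Nat.lt_succ_of_le hi
    have hu₀ := coeff_quadrinomial_mul_binaryPolynomial_nonneg p q r s u i
    have hv₀ := coeff_quadrinomial_mul_binaryPolynomial_nonneg p q r s v i
    have hu₂ := coeff_lt_three_of_tripleExponents_eq_zero hu₃ i
    have hv₂ := coeff_lt_three_of_tripleExponents_eq_zero hv₃ i
    rw [mul_sub, coeff_sub] at hodd ⊢
    obtain ⟨j, hj⟩ := hodd
    omega
  · rw [mul_sub, coeff_sub, coeff_eq_zero_of_productExponents_lt (by omega) hi,
      coeff_eq_zero_of_productExponents_lt (by omega) hi, sub_zero]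

end Splitting

section Search

/-- `f x`, in a form that makes the kernel evaluate `x` before it substitutes `x` into `f`. -/
def evalThen {α : Type} (x : ℕ) (f : ℕ → α) : α :=
  Nat.rec (f 0) (fun m _ => f (m + 1)) x

theorem evalThen_eq {α : Type} (x : ℕ) (f : ℕ → α) : evalThen x f = f x := by
  cases x <;> rfl

/-- The power series `t / quadrinomial p q r 0` over the field with two elements, modulo `X ^ N`,
where `p`, `q`, `r` are positive and `N ≤ 2 ^ k`. It is computed as the product of `t` and all
`quadrinomial p q r 0 (X ^ (2 ^ j))` with `j < k`: over this field, these multiply to the power of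
`quadrinomial p q r 0` with exponent `2 ^ k - 1`. -/
def divModTwo (p q r N : ℕ) : ℕ → ℕ → ℕ
  | 0, t => t
  | k + 1, t => evalThen (oddExponents (2 ^ k * p) (2 ^ k * q) (2 ^ k * r) 0 t % 2 ^ N)
      (divModTwo p q r N k)

/-- The exponents `i` such that one of the `k` exponents `i`, `i - 1`, …, `i - (k - 1)` belongs
to `t`. -/
def smear (t : ℕ) : ℕ → ℕ
  | 0 => 0
  | k + 1 => smear t k ||| t <<< k

/-- Local search for a part `u` of `t` such that neither `u` nor the other part `t ^^^ u` has triple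
exponents. In each round, every triple exponent `e` of one of them moves `e - p` or `e - q` to the
other part, depending on a digit of the pseudorandom number `R`, if that exponent belongs to `t`.
The exponents of the quadrinomial are rotated after each round. -/
def repairSplitting (t : ℕ) : ℕ → ℕ → ℕ → ℕ → ℕ → ℕ → ℕ → ℕ
  | 0, _, _, _, _, _, u => u
  | k + 1, p, q, r, s, R, u =>
    evalThen ((tripleExponents p q r s u).lor (tripleExponents p q r s (t.xor u))) fun e =>
      bif e.beq 0 then u else
        evalThen (e.land R) fun x =>
        evalThen (u.xor (((x.shiftRight p).lor ((e.xor x).shiftRight q)).land t)) fun u' =>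
        evalThen (R.shiftRight 17) fun R' => repairSplitting t k q r s p R' u'

/-- Search for a signed cofactor of `quadrinomial a b c 0`. The power series
`S = 1 / ((X + 1) * quadrinomial a b c 0)` over the field with two elements is periodic, and its
first run of `a` zeros ends its first period `t`, which is the support of the cofactor. The end of
this run is the first digit `0` of `x = smear S a`, and `x ^^^ (x + 1)` has the digit `1` exactly up
to there. The precision `2 ^ 15` exceeds the period in all cases with `a ≤ 15`; the source
`5 ^ 20000` of pseudorandom digits and the bound `1000` on the number of rounds were found by
experiment. -/
def searchSucceeds (a b c : ℕ) : Bool :=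
  evalThen (divModTwo a b c (2 ^ 15) 15 (2 ^ 2 ^ 15 - 1)) fun S =>
  evalThen (smear S a) fun x =>
  evalThen (S &&& (x ^^^ (x + 1))) fun t =>
  evalThen (5 ^ 20000) fun R =>
  evalThen (repairSplitting t 1000 a b c 0 R t) fun u =>
  evalThen (t ^^^ u) fun v => decide (IsSignedCofactor a b c 0 u v)

theorem exists_isSignedCofactor_of_searchSucceeds {a b c : ℕ} (h : searchSucceeds a b c = true) :
    ∃ u v, IsSignedCofactor a b c 0 u v := by
  simp only [searchSucceeds, evalThen_eq] at h
  exact ⟨_, _, of_decide_eq_true h⟩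

set_option maxHeartbeats 1000000 in
-- The kernel runs 455 searches.
theorem searchSucceeds_of_le_fifteen {a b c : ℕ} (hc : 0 < c) (hcb : c < b) (hba : b < a)
    (ha : a ≤ 15) : searchSucceeds a b c = true := by
  interval_cases a <;> interval_cases b <;> interval_cases c <;> decide +kernel

end Search

theorem newman_quadrinomials_deg_le_15_have_littlewood_multiples_general
    (a b c : ℕ) (hc : 0 < c) (hcb : c < b) (hba : b < a) (ha : a ≤ 15) :
    ∃ L : Polynomial ℤ, IsLittlewood L ∧
      (X ^ a + X ^ b + X ^ c + 1 : Polynomial ℤ) ∣ L := by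
  obtain ⟨u, v, h⟩ :=
    exists_isSignedCofactor_of_searchSucceeds (searchSucceeds_of_le_fifteen hc hcb hba ha)
  exact ⟨_, h.isLittlewood, Dvd.intro _ (by rw [quadrinomial, pow_zero])⟩

theorem newman_quadrinomials_deg_le_15_have_littlewood_multiples
    (a b c : ℕ) (hc : 0 < c) (hcb : c < b) (hba : b < a) (ha : a ≤ 15)
    (hexc : (a, b, c) ∉ ([(15, 14, 10), (15, 12, 10), (15, 12, 4), (15, 8, 6),
      (15, 5, 1), (15, 5, 3), (15, 11, 3), (15, 9, 7)] : List (ℕ × ℕ × ℕ))) :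
    ∃ L : Polynomial ℤ, IsLittlewood L ∧
      (X ^ a + X ^ b + X ^ c + 1 : Polynomial ℤ) ∣ L :=
  newman_quadrinomials_deg_le_15_have_littlewood_multiples_general a b c hc hcb hba ha
end

section
/- Let P ∈ ℤ[X] be a polynomial with odd constant term. If P divides a Littlewood polynomial L of degree n, then n + 1 is divisible by m(P); in particular, deg L ≥ m(P) − 1. -/
open Polynomial

/-- For `P ∈ ℤ[X]`, `mdeg P` is the least positive integer `m` such that
`(X + 1) * P̄` divides `X ^ m - 1` in `𝔽₂[X]`, where `P̄` is the reduction of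
`P` modulo `2` (and `0` if no such `m` exists). -/
noncomputable def mdeg (P : Polynomial ℤ) : ℕ :=
  sInf {m : ℕ | 0 < m ∧
    (X + 1) * P.map (Int.castRingHom (ZMod 2)) ∣ X ^ m - 1}

/-!
Modulo `2` every Littlewood polynomial of degree `n` becomes `1 + X + ⋯ + X ^ n`, so that
`(X + 1) * L̄ = X ^ (n + 1) - 1` is a multiple of `(X + 1) * P̄`. On the other hand, the exponents
`m` for which a polynomial `Q` divides `X ^ m - 1` are the multiples of the order of the class of
`X` modulo `Q`; for `Q = (X + 1) * P̄` that order is `mdeg P`.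
-/

theorem orderOf_eq_sInf_pow_eq_one {M : Type*} [Monoid M] (x : M) :
    orderOf x = sInf {n | 0 < n ∧ x ^ n = 1} := by
  simp only [orderOf, Function.minimalPeriod_eq_sInf_n_pos_IsPeriodicPt,
    isPeriodicPt_mul_iff_pow_eq_one, gt_iff_lt]

theorem dvd_X_pow_sub_one_iff_root_pow_eq_one {R : Type*} [CommRing R] {Q : R[X]} {m : ℕ} :
    Q ∣ X ^ m - 1 ↔ AdjoinRoot.root Q ^ m = 1 := by
  rw [← AdjoinRoot.mk_eq_mk, map_pow, AdjoinRoot.mk_X, map_one]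

theorem mdeg_eq_orderOf_root (P : ℤ[X]) :
    mdeg P = orderOf (AdjoinRoot.root ((X + 1) * P.map (Int.castRingHom (ZMod 2)))) := by
  simp only [mdeg, dvd_X_pow_sub_one_iff_root_pow_eq_one, orderOf_eq_sInf_pow_eq_one]

theorem mdeg_dvd_iff {P : ℤ[X]} {m : ℕ} :
    mdeg P ∣ m ↔ (X + 1) * P.map (Int.castRingHom (ZMod 2)) ∣ X ^ m - 1 := by
  rw [mdeg_eq_orderOf_root, orderOf_dvd_iff_pow_eq_one, dvd_X_pow_sub_one_iff_root_pow_eq_one]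

namespace IsLittlewood

variable {L : ℤ[X]} (R : Type*) [Ring R] [CharP R 2]

theorem intCast_coeff_eq_one (hL : IsLittlewood L) {i : ℕ} (hi : i ≤ L.natDegree) :
    (L.coeff i : R) = 1 := by
  rcases hL.2 i hi with h | h <;> simp [h, CharTwo.neg_eq]

theorem map_intCast_eq_geom_sum (hL : IsLittlewood L) :
    L.map (Int.castRingHom R) = ∑ i ∈ Finset.range (L.natDegree + 1), X ^ i := by
  conv_lhs => rw [L.as_sum_range, Polynomial.map_sum]
  refine Finset.sum_congr rfl fun i hi => ?_
  rw [map_monomial, eq_intCast, hL.intCast_coeff_eq_one R (Finset.mem_range_succ_iff.mp hi),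
    X_pow_eq_monomial]

theorem X_add_one_mul_map_intCast (hL : IsLittlewood L) :
    (X + 1) * L.map (Int.castRingHom R) = X ^ (L.natDegree + 1) - 1 := by
  rw [hL.map_intCast_eq_geom_sum R, ← CharTwo.sub_eq_add X, mul_geom_sum]

end IsLittlewood

theorem littlewood_multiple_degree_divisibility
    (P : Polynomial ℤ) (hP : Odd (P.coeff 0))
    (L : Polynomial ℤ) (hL : IsLittlewood L) (hdvd : P ∣ L) :
    mdeg P ∣ L.natDegree + 1 ∧ mdeg P - 1 ≤ L.natDegree := by
  have mdeg_dvd : mdeg P ∣ L.natDegree + 1 := by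
    rw [mdeg_dvd_iff, ← hL.X_add_one_mul_map_intCast (ZMod 2)]
    exact mul_dvd_mul_left _ (Polynomial.map_dvd _ hdvd)
  exact ⟨mdeg_dvd, Nat.sub_le_of_le_add (Nat.le_of_dvd (Nat.succ_pos _) mdeg_dvd)⟩
end

section
/- The quadrinomial Q(X) = X^15 + X^10 + X^8 + 1 divides some Littlewood polynomial of degree 32765, and Q divides no Littlewood polynomial of degree less than 32765. -/
open Polynomial

/-!
Modulo `2` a Littlewood polynomial of degree `n` is `1 + X + ⋯ + X ^ n`, so a polynomial `Q` can
only divide it if `(X - 1) * Q` divides `X ^ (n + 1) - 1` over `𝔽₂`, that is, if `n + 1` is a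
multiple of the order of `X` modulo `(X - 1) * Q`. For `Q = X ^ 15 + X ^ 10 + X ^ 8 + 1` this order
is `32766 = 2 * (2 ^ 14 - 1)`.

Conversely, let `D` be the quotient of `1 + X + ⋯ + X ^ 32765` by `Q` over `𝔽₂`. Each coefficient of
`Q * D`, computed with the coefficients of `D` read as `0` and `1`, is a sum of four terms of which
one or three are nonzero. It remains to choose signs for the coefficients of `D` so that three
nonzero terms never have the same sign. Such signs are found by a local search.
-/

namespace LittlewoodMultiple

theorem isLittlewood_and_natDegree_eq {P : ℤ[X]} {n : ℕ} (hdeg : P.natDegree ≤ n)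
    (hcoeff : ∀ i ≤ n, P.coeff i = 1 ∨ P.coeff i = -1) :
    IsLittlewood P ∧ P.natDegree = n := by
  have hlead : P.coeff n ≠ 0 := by
    rcases hcoeff n le_rfl with h | h <;> simp [h]
  have hn : P.natDegree = n := natDegree_eq_of_le_of_coeff_ne_zero hdeg hlead
  refine ⟨⟨fun h => hlead (by simp [h]), ?_⟩, hn⟩
  rwa [hn]

theorem map_zmod_two_of_isLittlewood {L : ℤ[X]} (hL : IsLittlewood L) :
    L.map (Int.castRingHom (ZMod 2)) = ∑ i ∈ Finset.range (L.natDegree + 1), X ^ i := by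
  ext k
  simp only [coeff_map, finsetSum_coeff, coeff_X_pow, Finset.sum_ite_eq, Finset.mem_range]
  split_ifs with hk
  · rcases hL.2 k (Nat.lt_succ_iff.mp hk) with h | h <;> rw [h] <;> decide
  · rw [coeff_eq_zero_of_natDegree_lt (by omega), map_zero]

section GeomSum

variable {R : Type*} [CommRing R]

theorem root_pow_eq_one_iff_dvd_geom_sum {Q : R[X]} {n : ℕ} :
    AdjoinRoot.root ((X - 1) * Q) ^ n = 1 ↔ Q ∣ ∑ i ∈ Finset.range n, X ^ i := by
  have hX : IsLeftRegular (X - 1 : R[X]) := (monic_X_sub_C 1).isRegular.left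
  rw [← hX.dvd_cancel_left, mul_geom_sum, ← AdjoinRoot.mk_eq_zero, map_sub, map_pow,
    AdjoinRoot.mk_X, map_one, sub_eq_zero]

theorem orderOf_root_dvd_natDegree_add_one {Q L : ℤ[X]} (hL : IsLittlewood L) (hQ : Q ∣ L) :
    orderOf (AdjoinRoot.root ((X - 1) * Q.map (Int.castRingHom (ZMod 2)))) ∣
      L.natDegree + 1 := by
  rw [orderOf_dvd_iff_pow_eq_one, root_pow_eq_one_iff_dvd_geom_sum,
    ← map_zmod_two_of_isLittlewood hL]
  exact map_dvd (Int.castRingHom (ZMod 2)) hQ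

theorem coeff_eq_zero_of_dvd_geom_sum [IsDomain R] {Q D : R[X]} {m n k : ℕ} (hQ : Q.coeff 0 ≠ 0)
    (hD : Q * D = ∑ i ∈ Finset.range n, X ^ i) (hm : Q ∣ ∑ i ∈ Finset.range m, X ^ i)
    (hmn : m ≤ n) (hk : k < m) (hk' : m ≤ k + Q.natDegree) : D.coeff k = 0 := by
  -- `D` agrees below `X ^ m` with the quotient `B`, whose degree is `m - 1 - Q.natDegree < k`.
  obtain ⟨B, hB⟩ := hm
  have hsum : ∑ i ∈ Finset.range m, (X : R[X]) ^ i ≠ 0 := (monic_geom_sum_X hk.ne_zero).ne_zero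
  have hBdeg : B.natDegree < k := by
    have hlt : (∑ i ∈ Finset.range m, (X : R[X]) ^ i).natDegree < m := by
      rw [natDegree_lt_iff_degree_lt hsum, degree_lt_iff_coeff_zero]
      simp +contextual
    rw [hB] at hsum hlt
    rw [natDegree_mul (left_ne_zero_of_mul hsum) (right_ne_zero_of_mul hsum)] at hlt
    omega
  have hdvd : X ^ m ∣ Q * (D - B) := by
    rw [X_pow_dvd_iff]
    intro d hd
    simp [mul_sub, hD, ← hB, hd, hd.trans_le hmn]
  have hDB := prime_X.pow_dvd_of_dvd_mul_left m (mt X_dvd_iff.mp hQ) hdvd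
  have h := X_pow_dvd_iff.mp hDB k hk
  rwa [coeff_sub, coeff_eq_zero_of_natDegree_lt hBdeg, sub_zero] at h

end GeomSum

section BitPoly

/-- The polynomial with coefficients `0` and `1` whose coefficient of `X ^ i` is bit `i` of `n`. It
lets polynomials of large degree be handled by bitwise arithmetic on natural numbers. -/
noncomputable def bitPoly (R : Type*) [Semiring R] (n : ℕ) : R[X] :=
  ∑ i ∈ Finset.range n.size, monomial i ((n.testBit i).toNat : R)

theorem coeff_bitPoly (R : Type*) [Semiring R] (n k : ℕ) :
    (bitPoly R n).coeff k = (n.testBit k).toNat := by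
  simp only [bitPoly, finsetSum_coeff, coeff_monomial, Finset.sum_ite_eq', Finset.mem_range]
  split_ifs with hk
  · rfl
  · simp [Nat.testBit_eq_false_of_lt (Nat.size_le.mp (not_lt.mp hk))]

theorem bitPoly_shiftLeft (R : Type*) [Semiring R] (n k : ℕ) :
    bitPoly R (n <<< k) = X ^ k * bitPoly R n := by
  ext i
  by_cases h : k ≤ i <;> simp [coeff_bitPoly, coeff_X_pow_mul', h]

theorem bitPoly_xor (m n : ℕ) :
    bitPoly (ZMod 2) (m ^^^ n) = bitPoly (ZMod 2) m + bitPoly (ZMod 2) n := by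
  ext i
  simp only [coeff_add, coeff_bitPoly, Nat.testBit_xor]
  cases m.testBit i <;> cases n.testBit i <;> decide

theorem bitPoly_two_pow_sub_one (R : Type*) [Semiring R] (n : ℕ) :
    bitPoly R (2 ^ n - 1) = ∑ i ∈ Finset.range n, X ^ i := by
  ext i
  by_cases h : i < n <;> simp [coeff_bitPoly, h]

end BitPoly

section Quadrinomial

/-- The quadrinomial `X ^ a + X ^ b + X ^ c + 1`. -/
noncomputable def quadrinomial (R : Type*) [Semiring R] (a b c : ℕ) : R[X] :=
  X ^ a + X ^ b + X ^ c + 1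

/-- Multiplication by the quadrinomial over `𝔽₂`, on polynomials encoded as in `bitPoly`. -/
def quadrinomialMul (a b c n : ℕ) : ℕ :=
  n <<< a ^^^ n <<< b ^^^ n <<< c ^^^ n

/-- The positions `k` at which at least three of the four terms `k - a`, `k - b`, `k - c`, `k`
belong to the set encoded by the bits of `n`. -/
def threeOfFour (a b c n : ℕ) : ℕ :=
  (n <<< a &&& n <<< b &&& (n <<< c ||| n)) ||| ((n <<< a ||| n <<< b) &&& n <<< c &&& n)

variable {a b c : ℕ}

theorem map_quadrinomial {R S : Type*} [Semiring R] [Semiring S] (f : R →+* S) :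
    (quadrinomial R a b c).map f = quadrinomial S a b c := by
  simp [quadrinomial]

theorem natDegree_quadrinomial_le (R : Type*) [Semiring R] (hb : b ≤ a) (hc : c ≤ a) :
    (quadrinomial R a b c).natDegree ≤ a := by
  unfold quadrinomial
  compute_degree!

theorem natDegree_quadrinomial (R : Type*) [Semiring R] [Nontrivial R] (hb : b < a) (hc : c < a) :
    (quadrinomial R a b c).natDegree = a := by
  refine natDegree_eq_of_le_of_coeff_ne_zero (natDegree_quadrinomial_le R hb.le hc.le) ?_
  simp [quadrinomial, coeff_X_pow, coeff_one, hb.ne', hc.ne', hb.ne_zero]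

theorem quadrinomial_mul_bitPoly (R : Type*) [Semiring R] (n : ℕ) :
    quadrinomial R a b c * bitPoly R n =
      bitPoly R (n <<< a) + bitPoly R (n <<< b) + bitPoly R (n <<< c) + bitPoly R n := by
  simp only [quadrinomial, bitPoly_shiftLeft, add_mul, one_mul]

theorem bitPoly_quadrinomialMul (n : ℕ) :
    bitPoly (ZMod 2) (quadrinomialMul a b c n) =
      quadrinomial (ZMod 2) a b c * bitPoly (ZMod 2) n := by
  simp only [quadrinomialMul, bitPoly_xor, quadrinomial_mul_bitPoly]

theorem signed_sum_eq_one_or_neg_one {p₁ p₂ p₃ p₄ n₁ n₂ n₃ n₄ : Bool}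
    (h₁ : (p₁ && n₁) = false) (h₂ : (p₂ && n₂) = false) (h₃ : (p₃ && n₃) = false)
    (h₄ : (p₄ && n₄) = false)
    (hodd : ((p₁ ^^ n₁) ^^ (p₂ ^^ n₂) ^^ (p₃ ^^ n₃) ^^ (p₄ ^^ n₄)) = true)
    (hp : (p₁ && p₂ && (p₃ || p₄) || (p₁ || p₂) && p₃ && p₄) = false)
    (hn : (n₁ && n₂ && (n₃ || n₄) || (n₁ || n₂) && n₃ && n₄) = false) :
    (p₁.toNat + p₂.toNat + p₃.toNat + p₄.toNat - (n₁.toNat + n₂.toNat + n₃.toNat + n₄.toNat) : ℤ)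
        = 1 ∨
      (p₁.toNat + p₂.toNat + p₃.toNat + p₄.toNat - (n₁.toNat + n₂.toNat + n₃.toNat + n₄.toNat) : ℤ)
        = -1 := by
  revert p₁ p₂ p₃ p₄ n₁ n₂ n₃ n₄
  decide +kernel

theorem coeff_quadrinomial_mul_bitPoly_sub {p n N k : ℕ} (hdisjoint : p &&& n = 0)
    (hodd : quadrinomialMul a b c (p ^^^ n) = 2 ^ N - 1) (hp : threeOfFour a b c p = 0)
    (hn : threeOfFour a b c n = 0) (hk : k < N) :
    (quadrinomial ℤ a b c * (bitPoly ℤ p - bitPoly ℤ n)).coeff k = 1 ∨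
      (quadrinomial ℤ a b c * (bitPoly ℤ p - bitPoly ℤ n)).coeff k = -1 := by
  have hdisjoint_shift (e : ℕ) : ((p <<< e).testBit k && (n <<< e).testBit k) = false := by
    rw [← Nat.testBit_and, ← Nat.shiftLeft_and_distrib, hdisjoint, Nat.zero_shiftLeft,
      Nat.zero_testBit]
  have hdisjoint_a := hdisjoint_shift a
  have hdisjoint_b := hdisjoint_shift b
  have hdisjoint_c := hdisjoint_shift c
  have hdisjoint_zero := hdisjoint_shift 0
  have hodd_k := congrArg (Nat.testBit · k) hodd
  have hp_k := congrArg (Nat.testBit · k) hp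
  have hn_k := congrArg (Nat.testBit · k) hn
  simp only [quadrinomialMul, threeOfFour, Nat.shiftLeft_xor_distrib, Nat.testBit_xor,
    Nat.testBit_and, Nat.testBit_or, Nat.testBit_two_pow_sub_one, hk, decide_true,
    Nat.zero_testBit, Nat.shiftLeft_zero] at hodd_k hp_k hn_k hdisjoint_zero
  simp only [mul_sub, quadrinomial_mul_bitPoly, coeff_sub, coeff_add, coeff_bitPoly]
  exact signed_sum_eq_one_or_neg_one hdisjoint_a hdisjoint_b hdisjoint_c hdisjoint_zero hodd_k
    hp_k hn_k

theorem isLittlewood_quadrinomial_mul_bitPoly_sub {p n d : ℕ} (hb : b ≤ a) (hc : c ≤ a)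
    (hdisjoint : p &&& n = 0) (hlt : p ^^^ n < 2 ^ (d + 1))
    (hodd : quadrinomialMul a b c (p ^^^ n) = 2 ^ (a + d + 1) - 1)
    (hp : threeOfFour a b c p = 0) (hn : threeOfFour a b c n = 0) :
    IsLittlewood (quadrinomial ℤ a b c * (bitPoly ℤ p - bitPoly ℤ n)) ∧
      (quadrinomial ℤ a b c * (bitPoly ℤ p - bitPoly ℤ n)).natDegree = a + d := by
  refine isLittlewood_and_natDegree_eq (natDegree_mul_le_of_le ?_ ?_) fun k hk =>
    coeff_quadrinomial_mul_bitPoly_sub hdisjoint hodd hp hn (Nat.lt_succ_of_le hk)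
  · exact natDegree_quadrinomial_le ℤ hb hc
  · refine natDegree_le_iff_coeff_eq_zero.mpr fun k hk => ?_
    have hbit : (p ^^^ n).testBit k = false :=
      Nat.testBit_eq_false_of_lt (hlt.trans_le (Nat.pow_le_pow_right Nat.two_pos hk))
    rw [Nat.testBit_xor, bne_eq_false_iff_eq] at hbit
    rw [coeff_sub, coeff_bitPoly, coeff_bitPoly, hbit, sub_self]

theorem not_quadrinomial_dvd_geom_sum {m n N k : ℕ} (hbits : quadrinomialMul a b c n = 2 ^ N - 1)
    (hb : b < a) (hc : c < a) (hb₀ : b ≠ 0) (hc₀ : c ≠ 0) (hmN : m ≤ N) (hk : k < m)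
    (hk' : m ≤ k + a) (hbit : n.testBit k = true) :
    ¬ quadrinomial (ZMod 2) a b c ∣ ∑ i ∈ Finset.range m, X ^ i := by
  intro hm
  have hcoeff : (quadrinomial (ZMod 2) a b c).coeff 0 ≠ 0 := by
    simp [quadrinomial, coeff_X_pow, hb₀.symm, hc₀.symm, hb.ne_zero.symm]
  have hmul : quadrinomial (ZMod 2) a b c * bitPoly (ZMod 2) n = ∑ i ∈ Finset.range N, X ^ i := by
    rw [← bitPoly_quadrinomialMul, hbits, bitPoly_two_pow_sub_one]
  have hzero := coeff_eq_zero_of_dvd_geom_sum hcoeff hmul hm hmN hk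
    (by rwa [natDegree_quadrinomial (ZMod 2) hb hc])
  simp [coeff_bitPoly, hbit] at hzero

end Quadrinomial

section Computation

/-- The quotient of `1 + X + ⋯ + X ^ 32765` by `X ^ 15 + X ^ 10 + X ^ 8 + 1` over `𝔽₂`, encoded as
in `bitPoly`. Writing `Q` for the divisor, `Q ^ 2 ^ i = Q (X ^ 2 ^ i)`, so the product of these
for `i < 15` is `Q ^ (2 ^ 15 - 1)`, which is congruent to `1 / Q` modulo `X ^ 2 ^ 15`. -/
def quotientBits : ℕ :=
  (List.range 15).foldl
    (fun n i => quadrinomialMul (15 * 2 ^ i) (10 * 2 ^ i) (8 * 2 ^ i) n % 2 ^ 32766)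
    (2 ^ 32766 - 1)

/-- Round `t` of a local search for a set `s` of negative coefficients. Wherever three nonzero terms
of the product have the same sign at position `k`, the sign at position `k - e` is flipped, where
the offset `e` runs cyclically through the exponents. The last factor masks the position `j` if the
quotient has both bits `j` and `j + t`: without such an irregular mask, changing with `t`, the
search runs into a cycle. -/
def flipSigns (s t : ℕ) : ℕ :=
  let e := [0, 15, 8, 10].getD (t % 4) 0
  s ^^^ ((threeOfFour 15 10 8 s ||| threeOfFour 15 10 8 (quotientBits ^^^ s)) >>> e &&&
    (quotientBits ^^^ (quotientBits &&& quotientBits >>> t)))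

/-- The positions of the coefficients of `quotientBits` that are given a negative sign. The number
of rounds is the first one at which the search reaches a solution. -/
def negativeBits : ℕ := (List.range 323).foldl flipSigns 0

/-- The positions of the coefficients of `quotientBits` that keep a positive sign. -/
def positiveBits : ℕ := quotientBits ^^^ negativeBits

theorem quadrinomialMul_quotientBits :
    quadrinomialMul 15 10 8 quotientBits = 2 ^ 32766 - 1 := by
  decide +kernel

theorem exists_isLittlewood_quadrinomial_mul :
    ∃ A : ℤ[X], IsLittlewood (quadrinomial ℤ 15 10 8 * A) ∧
      (quadrinomial ℤ 15 10 8 * A).natDegree = 32765 := by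
  have hdisjoint : positiveBits &&& negativeBits = 0 := by decide +kernel
  have hlt : positiveBits ^^^ negativeBits < 2 ^ (32750 + 1) := by decide +kernel
  have hodd : quadrinomialMul 15 10 8 (positiveBits ^^^ negativeBits) =
      2 ^ (15 + 32750 + 1) - 1 := by decide +kernel
  have hpositive : threeOfFour 15 10 8 positiveBits = 0 := by decide +kernel
  have hnegative : threeOfFour 15 10 8 negativeBits = 0 := by decide +kernel
  exact ⟨_, isLittlewood_quadrinomial_mul_bitPoly_sub (by norm_num) (by norm_num) hdisjoint hlt
    hodd hpositive hnegative⟩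

theorem not_quadrinomial_dvd_geom_sum_of_testBit {m k : ℕ} (hm : m ≤ 32766) (hk : k < m)
    (hk' : m ≤ k + 15) (hbit : quotientBits.testBit k = true) :
    ¬ quadrinomial (ZMod 2) 15 10 8 ∣ ∑ i ∈ Finset.range m, X ^ i :=
  not_quadrinomial_dvd_geom_sum quadrinomialMul_quotientBits (by norm_num) (by norm_num)
    (by norm_num) (by norm_num) hm hk hk' hbit

theorem orderOf_root_quadrinomial :
    orderOf (AdjoinRoot.root ((X - 1) * quadrinomial (ZMod 2) 15 10 8)) = 32766 := by
  refine orderOf_eq_of_pow_and_pow_div_prime (by norm_num) ?_ fun p hp hpdvd => ?_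
  · rw [root_pow_eq_one_iff_dvd_geom_sum, ← bitPoly_two_pow_sub_one,
      ← quadrinomialMul_quotientBits, bitPoly_quadrinomialMul]
    exact dvd_mul_right _ _
  · have hfactors : Nat.primeFactors 32766 = {2, 3, 43, 127} := by decide +kernel
    have hp_mem : p ∈ Nat.primeFactors 32766 := Nat.mem_primeFactors.mpr ⟨hp, hpdvd, by norm_num⟩
    rw [Ne, root_pow_eq_one_iff_dvd_geom_sum]
    -- `k` is a nonzero bit of the quotient among the last `15` positions below `32766 / p`.
    simp only [hfactors, Finset.mem_insert, Finset.mem_singleton] at hp_mem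
    rcases hp_mem with rfl | rfl | rfl | rfl
    · exact not_quadrinomial_dvd_geom_sum_of_testBit (k := 16382) (by norm_num) (by norm_num)
        (by norm_num) (by decide +kernel)
    · exact not_quadrinomial_dvd_geom_sum_of_testBit (k := 10919) (by norm_num) (by norm_num)
        (by norm_num) (by decide +kernel)
    · exact not_quadrinomial_dvd_geom_sum_of_testBit (k := 758) (by norm_num) (by norm_num)
        (by norm_num) (by decide +kernel)
    · exact not_quadrinomial_dvd_geom_sum_of_testBit (k := 252) (by norm_num) (by norm_num)
        (by norm_num) (by decide +kernel)

theorem dvd_natDegree_add_one_of_quadrinomial_dvd {L : ℤ[X]} (hL : IsLittlewood L)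
    (hdvd : quadrinomial ℤ 15 10 8 ∣ L) : 32766 ∣ L.natDegree + 1 := by
  have h := orderOf_root_dvd_natDegree_add_one hL hdvd
  rwa [map_quadrinomial, orderOf_root_quadrinomial] at h

end Computation

end LittlewoodMultiple

open LittlewoodMultiple in
theorem quadrinomial_15_10_8_minimal_littlewood_multiple :
    (∃ L : Polynomial ℤ, IsLittlewood L ∧ L.natDegree = 32765 ∧
      (X ^ 15 + X ^ 10 + X ^ 8 + 1 : Polynomial ℤ) ∣ L) ∧
    (∀ L : Polynomial ℤ, IsLittlewood L →
      (X ^ 15 + X ^ 10 + X ^ 8 + 1 : Polynomial ℤ) ∣ L → 32765 ≤ L.natDegree) := by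
  constructor
  · obtain ⟨A, hL, hdeg⟩ := exists_isLittlewood_quadrinomial_mul
    exact ⟨_, hL, hdeg, dvd_mul_right _ _⟩
  · intro L hL hdvd
    have hle := Nat.le_of_dvd L.natDegree.succ_pos
      (dvd_natDegree_add_one_of_quadrinomial_dvd hL hdvd)
    omega
end

section
/- There exist at least four pairwise distinct monic Littlewood polynomials of degree 1189, each of which is divisible by the polynomial P(X) = X^12 + X^11 + X^10 + 1; moreover, P divides no Littlewood polynomial of degree less than 1189. -/
open Polynomial

/-!
Modulo `2` a Littlewood polynomial of degree `n - 1` is `1 + X + ⋯ + X ^ (n - 1)`, so every root `x`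
of it in a ring of characteristic `2` satisfies `x ^ n = 1`, and `x = 1` is a root only if `n` is
even. Now
`X ^ 12 + X ^ 11 + X ^ 10 + 1 ≡ (X + 1) (X ^ 3 + X ^ 2 + 1) (X ^ 8 + X ^ 7 + X ^ 3 + X + 1)`
modulo `2`, where the roots of the three factors have multiplicative orders `1`, `7` and `85`.
Hence `n` is a multiple of `2 * 7 * 85 = 1190`. That this bound is attained is witnessed by explicit
sign sequences, whose divisibility is verified by long division.
-/

namespace LittlewoodMultiple

theorem orderOf_eq_of_geom_sum_eq_zero {S : Type*} [CommRing S] {p : ℕ} [Fact p.Prime] {x : S}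
    (hp : (p : S) ≠ 0) (hx : ∑ i ∈ Finset.range p, x ^ i = 0) : orderOf x = p := by
  have hpow : x ^ p = 1 := by rw [← sub_eq_zero, ← geom_sum_mul, hx, zero_mul]
  refine orderOf_eq_prime hpow fun h_one => hp ?_
  simpa [h_one] using hx

section CharTwo

variable {S : Type*} [CommRing S] [CharP S 2]

theorem orderOf_eq_seven {x : S} (hx : x ^ 3 + x ^ 2 + 1 = 0) : orderOf x = 7 := by
  have : Fact (Nat.Prime 7) := ⟨by norm_num⟩
  refine orderOf_eq_of_geom_sum_eq_zero ((CharP.cast_eq_zero_iff S 2 7).not.2 (by decide)) ?_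
  simp only [Finset.sum_range_succ, Finset.range_zero, Finset.sum_empty]
  linear_combination (norm := (ring_nf; reduce_mod_char!)) (x ^ 3 + x + 1) * hx

theorem orderOf_pow_seventeen_eq_five {x : S} (hx : x ^ 8 + x ^ 7 + x ^ 3 + x + 1 = 0) :
    orderOf (x ^ 17) = 5 := by
  have : Fact (Nat.Prime 5) := ⟨by norm_num⟩
  have h17 : x ^ 17 = x ^ 7 + x ^ 6 + x ^ 4 + x ^ 3 + x ^ 2 + x + 1 := by
    linear_combination (norm := (ring_nf; reduce_mod_char!))
      (x ^ 9 + x ^ 8 + x ^ 7 + x ^ 6 + x ^ 5 + x ^ 3 + x ^ 2 + 1) * hx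
  have h34 : (x ^ 17) ^ 2 = x ^ 6 + x ^ 5 + x ^ 3 := by
    rw [h17]
    linear_combination (norm := (ring_nf; reduce_mod_char!)) (x ^ 6 + x ^ 5 + x + 1) * hx
  have h51 : (x ^ 17) ^ 3 = x ^ 4 + x ^ 3 + x ^ 2 + x := by
    rw [pow_succ, h34, h17]
    linear_combination (norm := (ring_nf; reduce_mod_char!)) (x ^ 5 + x ^ 4 + x) * hx
  have h68 : (x ^ 17) ^ 4 = x ^ 7 + x ^ 5 + x ^ 3 := by
    rw [pow_mul _ 2 2, h34]
    linear_combination (norm := (ring_nf; reduce_mod_char!)) (x ^ 4 + x ^ 3) * hx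
  refine orderOf_eq_of_geom_sum_eq_zero ((CharP.cast_eq_zero_iff S 2 5).not.2 (by decide)) ?_
  simp only [Finset.sum_range_succ, Finset.range_zero, Finset.sum_empty, pow_zero, pow_one,
    h34, h51, h68]
  rw [h17]
  ring_nf
  reduce_mod_char!

theorem pow_five_ne_one {x : S} (hx : x ^ 8 + x ^ 7 + x ^ 3 + x + 1 = 0) : x ^ 5 ≠ 1 := by
  have := CharP.nontrivial_of_char_ne_one (R := S) (v := 2) (by decide)
  intro h5
  refine one_ne_zero (α := S) ?_
  linear_combination (norm := (ring_nf; reduce_mod_char!))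
    (x ^ 4 + x ^ 2 + x) * hx + (x ^ 7 + x ^ 6 + x ^ 5 + x ^ 3 + x + 1) * h5

theorem orderOf_eq_eightyFive {x : S} (hx : x ^ 8 + x ^ 7 + x ^ 3 + x + 1 = 0) :
    orderOf x = 85 := by
  have h5 := orderOf_pow_seventeen_eq_five hx
  refine orderOf_eq_of_pow_and_pow_div_prime (by decide) ?_ fun p hp hdvd => ?_
  · rw [pow_mul x 17 5, ← h5, pow_orderOf_eq_one]
  · have : p = 5 ∨ p = 17 := by
      rw [show 85 = 5 * 17 by rfl, hp.dvd_mul,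
        Nat.prime_dvd_prime_iff_eq hp (by norm_num),
        Nat.prime_dvd_prime_iff_eq hp (by norm_num)] at hdvd
      exact hdvd
    rcases this with rfl | rfl
    · intro h
      rw [h] at h5
      simp at h5
    · exact pow_five_ne_one hx

theorem pow_twelve_add_pow_eleven_add_pow_ten_add_one (x : S) : x ^ 12 + x ^ 11 + x ^ 10 + 1 =
    (x + 1) * (x ^ 3 + x ^ 2 + 1) * (x ^ 8 + x ^ 7 + x ^ 3 + x + 1) := by
  ring_nf
  reduce_mod_char!

theorem aeval_eq_geom_sum_of_odd_coeff {L : ℤ[X]} (hL : ∀ i ≤ L.natDegree, Odd (L.coeff i))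
    (x : S) : aeval x L = ∑ i ∈ Finset.range (L.natDegree + 1), x ^ i := by
  rw [aeval_eq_sum_range]
  refine Finset.sum_congr rfl fun i hi => ?_
  have hodd := hL i (Finset.mem_range_succ_iff.1 hi)
  rw [zsmul_eq_mul, CharTwo.intCast_eq_ite, if_neg (Int.not_even_iff_odd.2 hodd), one_mul]

theorem orderOf_dvd_natDegree_add_one {L : ℤ[X]} (hL : ∀ i ≤ L.natDegree, Odd (L.coeff i))
    {x : S} (hx : aeval x L = 0) : orderOf x ∣ L.natDegree + 1 := by
  rw [aeval_eq_geom_sum_of_odd_coeff hL] at hx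
  rw [orderOf_dvd_iff_pow_eq_one, ← sub_eq_zero, ← geom_sum_mul, hx, zero_mul]

theorem two_dvd_natDegree_add_one {L : ℤ[X]} (hL : ∀ i ≤ L.natDegree, Odd (L.coeff i))
    (h_one : aeval (1 : S) L = 0) : 2 ∣ L.natDegree + 1 := by
  rw [aeval_eq_geom_sum_of_odd_coeff hL] at h_one
  rw [← CharP.cast_eq_zero_iff S 2]
  simpa using h_one

end CharTwo

theorem dvd_natDegree_add_one_of_odd_coeff {L : ℤ[X]} (hL : ∀ i ≤ L.natDegree, Odd (L.coeff i))
    (hdvd : X ^ 12 + X ^ 11 + X ^ 10 + 1 ∣ L) : 1190 ∣ L.natDegree + 1 := by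
  let K := AlgebraicClosure (ZMod 2)
  have haeval {x : K} (hx : x ^ 12 + x ^ 11 + x ^ 10 + 1 = 0) : aeval x L = 0 :=
    aeval_eq_zero_of_dvd_aeval_eq_zero hdvd (by simpa using hx)
  obtain ⟨x, hx⟩ := IsAlgClosed.exists_root (X ^ 3 + X ^ 2 + 1 : K[X])
    ((show degree _ = 3 by compute_degree!).trans_ne (by norm_num))
  obtain ⟨y, hy⟩ := IsAlgClosed.exists_root (X ^ 8 + X ^ 7 + X ^ 3 + X + 1 : K[X])
    ((show degree _ = 8 by compute_degree!).trans_ne (by norm_num))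
  simp only [IsRoot.def, eval_add, eval_pow, eval_X, eval_one] at hx hy
  have h_two : 2 ∣ L.natDegree + 1 :=
    two_dvd_natDegree_add_one hL (haeval (by simp [CharTwo.add_self_eq_zero]))
  have h_seven : 7 ∣ L.natDegree + 1 := by
    rw [← orderOf_eq_seven hx]
    refine orderOf_dvd_natDegree_add_one hL (haeval ?_)
    rw [pow_twelve_add_pow_eleven_add_pow_ten_add_one, hx, mul_zero, zero_mul]
  have h_eightyFive : 85 ∣ L.natDegree + 1 := by
    rw [← orderOf_eq_eightyFive hy]
    refine orderOf_dvd_natDegree_add_one hL (haeval ?_)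
    rw [pow_twelve_add_pow_eleven_add_pow_ten_add_one, hy, mul_zero]
  omega

theorem odd_coeff_of_isLittlewood {L : ℤ[X]} (hL : IsLittlewood L) :
    ∀ i ≤ L.natDegree, Odd (L.coeff i) := by
  intro i hi
  rcases hL.2 i hi with h | h <;> rw [h] <;> decide

section Semiring

variable {R : Type*} [Semiring R]

/-- The polynomial whose coefficients, constant term first, are the entries of a list. -/
noncomputable def ofCoeffs : List R → R[X]
  | [] => 0
  | c :: l => C c + X * ofCoeffs l

theorem coeff_ofCoeffs (l : List R) (i : ℕ) : (ofCoeffs l).coeff i = l.getD i 0 := by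
  induction l generalizing i with
  | nil => simp [ofCoeffs]
  | cons c l ih => cases i <;> simp [ofCoeffs, coeff_C, ih]

theorem ofCoeffs_injOn_length (n : ℕ) : Set.InjOn ofCoeffs {l : List R | l.length = n} := by
  intro l hl m hm h
  refine List.ext_getElem (hl.trans hm.symm) fun i hil him => ?_
  rw [← List.getD_eq_getElem l 0 hil, ← List.getD_eq_getElem m 0 him, ← coeff_ofCoeffs, h,
    coeff_ofCoeffs]

theorem natDegree_ofCoeffs {l : List R} {n : ℕ} (hl : l.length = n + 1) (hn : l.getD n 0 ≠ 0) :
    (ofCoeffs l).natDegree = n := by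
  refine natDegree_eq_of_le_of_coeff_ne_zero ?_ (by rwa [coeff_ofCoeffs])
  rw [natDegree_le_iff_coeff_eq_zero]
  intro i hi
  rw [coeff_ofCoeffs, List.getD_eq_default _ _ (by omega)]

theorem ofCoeffs_replicate_zero (n : ℕ) : ofCoeffs (List.replicate n (0 : R)) = 0 := by
  induction n with
  | zero => rfl
  | succ n ih => simp [List.replicate_succ, ofCoeffs, ih]

end Semiring

section Elimination

variable {R : Type*} [CommRing R]

/-- The coefficient list of `ofCoeffs l - C t * ofCoeffs q`. -/
def subMulCoeffs (t : R) : List R → List R → List R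
  | l, [] => l
  | [], b :: q => -(t * b) :: subMulCoeffs t [] q
  | a :: l, b :: q => (a - t * b) :: subMulCoeffs t l q

/-- One step of division by `ofCoeffs (1 :: q)` in ascending powers: the constant coefficient of the
dividend is cleared by subtracting a multiple of the divisor, and the result is divided by `X`. -/
def eliminateConstantCoeff (q : List R) : List R → List R
  | [] => []
  | c :: l => subMulCoeffs c l q

theorem ofCoeffs_subMulCoeffs (t : R) (l q : List R) :
    ofCoeffs (subMulCoeffs t l q) = ofCoeffs l - C t * ofCoeffs q := by
  induction l, q using subMulCoeffs.induct with
  | case1 l => simp [subMulCoeffs, ofCoeffs]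
  | case2 b q ih =>
    simp only [subMulCoeffs, ofCoeffs, ih, C_neg, C_mul]
    ring
  | case3 a l b q ih =>
    simp only [subMulCoeffs, ofCoeffs, ih, C_sub, C_mul]
    ring

theorem dvd_ofCoeffs_of_dvd_eliminateConstantCoeff {q l : List R}
    (h : ofCoeffs (1 :: q) ∣ ofCoeffs (eliminateConstantCoeff q l)) :
    ofCoeffs (1 :: q) ∣ ofCoeffs l := by
  cases l with
  | nil => exact dvd_zero _
  | cons c l =>
    have hsum : ofCoeffs (c :: l) =
        C c * ofCoeffs (1 :: q) + X * ofCoeffs (eliminateConstantCoeff q (c :: l)) := by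
      simp only [eliminateConstantCoeff, ofCoeffs, ofCoeffs_subMulCoeffs, C_1]
      ring
    rw [hsum]
    exact dvd_add (dvd_mul_left _ _) (h.mul_left X)

theorem dvd_ofCoeffs_of_iterate_eliminateConstantCoeff {q l : List R} {n m : ℕ}
    (h : (eliminateConstantCoeff q)^[n] l = List.replicate m 0) :
    ofCoeffs (1 :: q) ∣ ofCoeffs l := by
  induction n generalizing l with
  | zero =>
    rw [Function.iterate_zero_apply] at h
    rw [h, ofCoeffs_replicate_zero]
    exact dvd_zero _
  | succ n ih => exact dvd_ofCoeffs_of_dvd_eliminateConstantCoeff (ih h)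

end Elimination

/-- The first `n` binary digits of `N`, lowest first, with `0` replaced by `-1`. -/
def signs (n N : ℕ) : List ℤ := (List.range n).map fun i => if N.testBit i then 1 else -1

theorem mem_signs {n N : ℕ} {c : ℤ} (hc : c ∈ signs n N) : c = 1 ∨ c = -1 := by
  obtain ⟨i, -, rfl⟩ := List.mem_map.1 hc
  exact ite_eq_or_eq ..

theorem isLittlewood_ofCoeffs {l : List ℤ} (hl : l ≠ []) (h : ∀ c ∈ l, c = 1 ∨ c = -1) :
    IsLittlewood (ofCoeffs l) := by
  obtain ⟨n, hn⟩ := Nat.exists_eq_add_one.2 (List.length_pos_iff.2 hl)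
  have hget (i : ℕ) (hi : i ≤ n) : l.getD i 0 = 1 ∨ l.getD i 0 = -1 := by
    rw [List.getD_eq_getElem l 0 (by omega)]
    exact h _ (List.getElem_mem _)
  have hdeg : (ofCoeffs l).natDegree = n :=
    natDegree_ofCoeffs hn (by rcases hget n le_rfl with h | h <;> rw [h] <;> decide)
  refine ⟨fun hzero => ?_, fun i hi => ?_⟩
  · have hcoeff := hget 0 n.zero_le
    rw [← coeff_ofCoeffs, hzero, coeff_zero] at hcoeff
    revert hcoeff
    decide
  · rw [coeff_ofCoeffs]
    exact hget i (hi.trans_eq hdeg)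

/-- Sign sequences of four Littlewood multiples of degree `1189`, as blocks of `119` binary digits
decoded by `signs`. -/
def signSequence : Fin 4 → List ℤ := fun k => List.flatMap (signs 119) <| ![
    [309689049200209681748270469073425066, 548627040891877853309878676151744219,
     143804478620678892560196727777563046, 391490325671053595063432353741876137,
     348906421317932065664619967328613546, 198504387454359736580918418696582666,
     513392281312868422902980183381356430, 26938880291470489304794293008048361,
     182556418003235981941510371339109148, 600708704648257732893800569018482924],
    [140387933344397805292759141695925077, 389802675444432421018215070297360610,
     115761443808177706149981181344099693, 556410323085366081270946295931643061,
     261682513869764662952342702955088242, 487585812665387349883620719427846350,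
     365560018614691718050343187319313456, 540649965685377452081995060754202618,
     578211238984660790326915029605121945, 600708704648323887472235148304281948],
    [140387933344397805292759141695925077, 389802675444432421018215070297360610,
     115761443808177706149981181344099693, 556410323085366081270946295931643061,
     593989512815993631178294468025174386, 152450436338029213470208474474350422,
     79792760683600940270327613180276667, 540649965685377452081995060754202618,
     578211238984660790326915029605121945, 600708704648323887472235148304281948],
    [100342636557580823657621022036056757, 201478384298123752233191220467808675,
     611151711258539000654776208573853293, 404563842862643787373022496874220399,
     54656845014470313383795709940708018, 589033621094199726550915118810881821,
     299785802987635597870168124886217186, 144442361044020289740429200930213562,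
     155608902610357969065231714370743943, 627064241714463073523545570488909808]
] k

theorem length_signSequence : ∀ k, (signSequence k).length = 1190 := by
  decide +kernel

theorem getD_signSequence : ∀ k, (signSequence k).getD 1189 0 = 1 := by
  decide +kernel

theorem signSequence_injective : Function.Injective signSequence := by
  decide +kernel

theorem iterate_eliminateConstantCoeff_signSequence : ∀ k,
    (eliminateConstantCoeff [0, 0, 0, 0, 0, 0, 0, 0, 0, 1, 1, 1])^[1178] (signSequence k) =
      List.replicate 12 0 := by
  decide +kernel

theorem mem_signSequence {k : Fin 4} {c : ℤ} (hc : c ∈ signSequence k) : c = 1 ∨ c = -1 := by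
  obtain ⟨N, -, hN⟩ := List.mem_flatMap.1 hc
  exact mem_signs hN

/-- The four witnesses: the Littlewood polynomials with coefficients `signSequence`. -/
noncomputable def littlewoodMultiple (k : Fin 4) : ℤ[X] := ofCoeffs (signSequence k)

theorem littlewoodMultiple_injective : Function.Injective littlewoodMultiple := fun _ _ h =>
  signSequence_injective
    (ofCoeffs_injOn_length 1190 (length_signSequence _) (length_signSequence _) h)

theorem isLittlewood_littlewoodMultiple (k : Fin 4) : IsLittlewood (littlewoodMultiple k) :=
  isLittlewood_ofCoeffs (List.ne_nil_of_length_eq_add_one (length_signSequence k))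
    fun _ => mem_signSequence

theorem natDegree_littlewoodMultiple (k : Fin 4) : (littlewoodMultiple k).natDegree = 1189 :=
  natDegree_ofCoeffs (length_signSequence k) (by rw [getD_signSequence]; exact one_ne_zero)

theorem monic_littlewoodMultiple (k : Fin 4) : (littlewoodMultiple k).Monic := by
  rw [Monic, leadingCoeff, natDegree_littlewoodMultiple, littlewoodMultiple, coeff_ofCoeffs,
    getD_signSequence]

theorem dvd_littlewoodMultiple (k : Fin 4) :
    X ^ 12 + X ^ 11 + X ^ 10 + 1 ∣ littlewoodMultiple k := by
  have hdivisor : (X ^ 12 + X ^ 11 + X ^ 10 + 1 : ℤ[X]) =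
      ofCoeffs (1 :: [0, 0, 0, 0, 0, 0, 0, 0, 0, 1, 1, 1]) := by
    simp only [ofCoeffs, C_0, C_1]
    ring
  rw [hdivisor]
  exact dvd_ofCoeffs_of_iterate_eliminateConstantCoeff
    (iterate_eliminateConstantCoeff_signSequence k)

end LittlewoodMultiple

open LittlewoodMultiple

theorem four_minimal_littlewood_multiples_of_X12_X11_X10_1_general :
    (∃ L₁ L₂ L₃ L₄ : Polynomial ℤ,
      L₁ ≠ L₂ ∧ L₁ ≠ L₃ ∧ L₁ ≠ L₄ ∧ L₂ ≠ L₃ ∧ L₂ ≠ L₄ ∧ L₃ ≠ L₄ ∧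
      (∀ L ∈ [L₁, L₂, L₃, L₄], L.Monic ∧ IsLittlewood L ∧ L.natDegree = 1189 ∧
        (X ^ 12 + X ^ 11 + X ^ 10 + 1 : Polynomial ℤ) ∣ L)) ∧
    (∀ L : Polynomial ℤ, (∀ i ≤ L.natDegree, Odd (L.coeff i)) →
      (X ^ 12 + X ^ 11 + X ^ 10 + 1 : Polynomial ℤ) ∣ L → 1190 ∣ L.natDegree + 1) := by
  refine ⟨⟨littlewoodMultiple 0, littlewoodMultiple 1, littlewoodMultiple 2, littlewoodMultiple 3,
    ?_, ?_, ?_, ?_, ?_, ?_, ?_⟩, fun _ => dvd_natDegree_add_one_of_odd_coeff⟩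
  iterate 6 exact littlewoodMultiple_injective.ne (by decide)
  have hmultiple (k : Fin 4) : (littlewoodMultiple k).Monic ∧ IsLittlewood (littlewoodMultiple k) ∧
      (littlewoodMultiple k).natDegree = 1189 ∧
        X ^ 12 + X ^ 11 + X ^ 10 + 1 ∣ littlewoodMultiple k :=
    ⟨monic_littlewoodMultiple k, isLittlewood_littlewoodMultiple k, natDegree_littlewoodMultiple k,
      dvd_littlewoodMultiple k⟩
  simp only [List.forall_mem_cons, List.not_mem_nil, false_imp_iff, implies_true, and_true]
  exact ⟨hmultiple 0, hmultiple 1, hmultiple 2, hmultiple 3⟩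

theorem four_minimal_littlewood_multiples_of_X12_X11_X10_1 :
    (∃ L₁ L₂ L₃ L₄ : Polynomial ℤ,
      L₁ ≠ L₂ ∧ L₁ ≠ L₃ ∧ L₁ ≠ L₄ ∧ L₂ ≠ L₃ ∧ L₂ ≠ L₄ ∧ L₃ ≠ L₄ ∧
      (∀ L ∈ [L₁, L₂, L₃, L₄], L.Monic ∧ IsLittlewood L ∧ L.natDegree = 1189 ∧
        (X ^ 12 + X ^ 11 + X ^ 10 + 1 : Polynomial ℤ) ∣ L)) ∧
    (∀ L : Polynomial ℤ, IsLittlewood L →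
      (X ^ 12 + X ^ 11 + X ^ 10 + 1 : Polynomial ℤ) ∣ L → 1189 ≤ L.natDegree) := by
  refine ⟨four_minimal_littlewood_multiples_of_X12_X11_X10_1_general.1, fun L hL hdvd => ?_⟩
  have h_dvd := four_minimal_littlewood_multiples_of_X12_X11_X10_1_general.2 L
    (odd_coeff_of_isLittlewood hL) hdvd
  exact Nat.le_of_succ_le_succ (Nat.le_of_dvd L.natDegree.succ_pos h_dvd)
end

section
/- The polynomial P(X) = X^14 − X^12 + X^3 + 1 divides some Littlewood polynomial of degree 16381, and P divides no Littlewood polynomial of degree less than 16381. -/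
open Polynomial

/-!
Write `P = X ^ 14 - X ^ 12 + X ^ 3 + 1`. Modulo `2`, a Littlewood polynomial of degree `n` is
`1 + X + ⋯ + X ^ n`, so divisibility by `P` forces `P` to divide this geometric sum over `ZMod 2`.

This necessary condition is also sufficient, because `P (-1) = 0` and the absolute values of the
coefficients of `P` add up to `4`. Lift a quotient over `ZMod 2` to `Q` by choosing the coefficient
`(-1) ^ i` for each `X ^ i` present in it. The `k`-th coefficient `c` of `P * Q` is
`∑ i, P.coeff i * Q.coeff (k - i)`. Subtracting `(-1) ^ k * P (-1) = 0` from `2 * c` replaces each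
`2 * Q.coeff (k - i)` by a number `±1`, so `|2 * c| ≤ 4`. As `c` is odd for `k ≤ n`, it is `±1`.

Over `ZMod 2` a root `x` of `P` satisfies `x ^ 8192 = x` and has order the Mersenne prime `8191`.
The root `1` of `P` moreover makes the length `n + 1` of the geometric sum even, so `P` divides it
only if `2 * 8191 ∣ n + 1`. Conversely `P * (X - 1)` divides
`(X ^ 8191 - 1) ^ 2 = X ^ (2 * 8191) - 1`.
-/

theorem IsLittlewood.map_zmod_two {L : ℤ[X]} (hL : IsLittlewood L) :
    L.map (Int.castRingHom (ZMod 2)) = ∑ i ∈ Finset.range (L.natDegree + 1), X ^ i := by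
  ext k
  simp only [coeff_map, finsetSum_coeff, coeff_X_pow, Finset.sum_ite_eq, Finset.mem_range]
  split_ifs with hk
  · rcases hL.2 k (Nat.lt_succ_iff.mp hk) with h | h <;> rw [h] <;> decide
  · rw [coeff_eq_zero_of_natDegree_lt (by lia), map_zero]

theorem isLittlewood_and_natDegree_eq_of_map_eq_geom_sum {L : ℤ[X]} {n : ℕ}
    (hdeg : L.natDegree ≤ n) (hbound : ∀ k, |L.coeff k| ≤ 2)
    (hmap : L.map (Int.castRingHom (ZMod 2)) = ∑ i ∈ Finset.range (n + 1), X ^ i) :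
    IsLittlewood L ∧ L.natDegree = n := by
  have hcoeff : ∀ k ≤ n, L.coeff k = 1 ∨ L.coeff k = -1 := fun k hk ↦ by
    have hodd : Odd (L.coeff k) := by
      rw [← ZMod.intCast_eq_one_iff_odd, ← eq_intCast (Int.castRingHom (ZMod 2)), ← coeff_map, hmap]
      simp only [finsetSum_coeff, coeff_X_pow, Finset.sum_ite_eq, Finset.mem_range]
      exact if_pos (Nat.lt_succ_of_le hk)
    obtain ⟨j, hj⟩ := hodd
    have := abs_le.mp (hbound k)
    lia
  have htop : L.coeff n ≠ 0 := by
    rcases hcoeff n le_rfl with h | h <;> simp [h]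
  exact ⟨⟨fun h ↦ htop (by rw [h, coeff_zero]), fun i hi ↦ hcoeff i (hi.trans hdeg)⟩,
    hdeg.antisymm (le_natDegree_of_ne_zero htop)⟩

theorem coeff_mul_eq_sum_support {R : Type*} [Semiring R] (f g : R[X]) (k : ℕ) :
    (f * g).coeff k =
      ∑ i ∈ f.support, f.coeff i * if i ≤ k then g.coeff (k - i) else 0 := by
  conv_lhs => rw [f.as_sum_support_C_mul_X_pow]
  simp only [Finset.sum_mul, finsetSum_coeff, mul_assoc, coeff_C_mul, coeff_X_pow_mul']

/-- The lift to `ℤ[X]` of a polynomial over `ZMod 2` that places the coefficient `ε ^ i` at each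
exponent `i` of its support, so that its products with a polynomial vanishing at `ε` have small
coefficients. -/
noncomputable def signedLift (ε : ℤˣ) (q : (ZMod 2)[X]) : ℤ[X] :=
  ∑ i ∈ q.support, monomial i (ε ^ i : ℤ)

section SignedLift

variable (ε : ℤˣ) (q : (ZMod 2)[X])

theorem coeff_signedLift (k : ℕ) :
    (signedLift ε q).coeff k = if k ∈ q.support then (ε ^ k : ℤ) else 0 := by
  simp only [signedLift, finsetSum_coeff, coeff_monomial, Finset.sum_ite_eq']

theorem map_signedLift : (signedLift ε q).map (Int.castRingHom (ZMod 2)) = q := by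
  have hε : ((ε : ℤ) : ZMod 2) = 1 := by rcases Int.units_eq_one_or ε with rfl | rfl <;> decide
  ext k
  simp only [coeff_map, coeff_signedLift, mem_support_iff]
  split_ifs with hk
  · have hone : q.coeff k = 1 := Fin.eq_one_of_ne_zero _ hk
    rw [hone, eq_intCast, Int.cast_pow, hε, one_pow]
  · simp [not_not.mp hk]

theorem natDegree_signedLift_le : (signedLift ε q).natDegree ≤ q.natDegree :=
  natDegree_sum_le_of_forall_le _ _ fun i hi ↦
    (natDegree_monomial_le _).trans (le_natDegree_of_mem_supp i hi)

variable {ε}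

theorem abs_two_mul_ite_coeff_signedLift_sub (k i : ℕ) :
    |2 * (if i ≤ k then (signedLift ε q).coeff (k - i) else 0) - (ε ^ k * ε ^ i : ℤ)| = 1 := by
  have hunit : |(ε ^ k * ε ^ i : ℤ)| = 1 := by
    rw [← pow_add, abs_pow, Int.isUnit_iff_abs_eq.mp ε.isUnit, one_pow]
  have hsplit (hi : i ≤ k) : (ε ^ (k - i) : ℤ) = ε ^ k * ε ^ i := by
    have hsq : (ε ^ i * ε ^ i : ℤ) = 1 := by
      rw [← mul_pow, Int.units_coe_mul_self, one_pow]
    rw [← pow_sub_mul_pow _ hi, mul_assoc, hsq, mul_one]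
  rw [coeff_signedLift]
  split_ifs with hi hmem
  · rw [hsplit hi, two_mul, add_sub_cancel_right, hunit]
  all_goals rw [mul_zero, zero_sub, abs_neg, hunit]

theorem two_mul_abs_coeff_mul_signedLift_le {f : ℤ[X]} (hroot : f.IsRoot ε) (k : ℕ) :
    2 * |(f * signedLift ε q).coeff k| ≤ ∑ i ∈ f.support, |f.coeff i| := by
  set c : ℕ → ℤ := fun i ↦ if i ≤ k then (signedLift ε q).coeff (k - i) else 0
  have hvanish : ∑ i ∈ f.support, f.coeff i * (ε ^ i : ℤ) = 0 := by
    rw [← hroot.eq_zero, eval_eq_sum, sum_def]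
  have hdist (i : ℕ) : |2 * c i - ε ^ k * ε ^ i| = 1 :=
    abs_two_mul_ite_coeff_signedLift_sub q k i
  calc 2 * |(f * signedLift ε q).coeff k|
      = |2 * ∑ i ∈ f.support, f.coeff i * c i - ε ^ k * ∑ i ∈ f.support, f.coeff i * ε ^ i| := by
        rw [hvanish, coeff_mul_eq_sum_support, mul_zero, sub_zero, abs_mul, abs_two]
    _ = |∑ i ∈ f.support, f.coeff i * (2 * c i - ε ^ k * ε ^ i)| := by
        rw [Finset.mul_sum, Finset.mul_sum, ← Finset.sum_sub_distrib]
        congr! 2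
        ring
    _ ≤ ∑ i ∈ f.support, |f.coeff i * (2 * c i - ε ^ k * ε ^ i)| := Finset.abs_sum_le_sum_abs ..
    _ = ∑ i ∈ f.support, |f.coeff i| := by simp only [abs_mul, hdist, mul_one]

theorem natDegree_mul_signedLift_le {f : ℤ[X]} (hlead : Odd f.leadingCoeff) {n : ℕ}
    (hq : f.map (Int.castRingHom (ZMod 2)) * q = ∑ i ∈ Finset.range (n + 1), X ^ i) :
    (f * signedLift ε q).natDegree ≤ n := by
  set g := f.map (Int.castRingHom (ZMod 2))
  have hg : g.natDegree = f.natDegree := natDegree_map_of_leadingCoeff_ne_zero _ <| by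
    rw [eq_intCast, ZMod.intCast_eq_one_iff_odd.mpr hlead]
    exact one_ne_zero
  have hne : g * q ≠ 0 := hq ▸ (monic_geom_sum_X n.succ_ne_zero).ne_zero
  calc (f * signedLift ε q).natDegree
      ≤ f.natDegree + (signedLift ε q).natDegree := natDegree_mul_le
    _ ≤ g.natDegree + q.natDegree := by grw [hg, natDegree_signedLift_le]
    _ = (g * q).natDegree :=
        (natDegree_mul (left_ne_zero_of_mul hne) (right_ne_zero_of_mul hne)).symm
    _ ≤ n := hq ▸ natDegree_sum_le_of_forall_le _ _ fun i hi ↦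
        (natDegree_X_pow_le i).trans (Finset.mem_range_succ_iff.mp hi)

end SignedLift

theorem exists_isLittlewood_multiple_iff_dvd_geom_sum {f : ℤ[X]} {ε : ℤˣ} (hroot : f.IsRoot ε)
    (hlead : Odd f.leadingCoeff) (hlength : ∑ i ∈ f.support, |f.coeff i| ≤ 4) {n : ℕ} :
    (∃ L, IsLittlewood L ∧ L.natDegree = n ∧ f ∣ L) ↔
      f.map (Int.castRingHom (ZMod 2)) ∣ ∑ i ∈ Finset.range (n + 1), X ^ i := by
  constructor
  · rintro ⟨L, hL, rfl, hdvd⟩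
    exact hL.map_zmod_two ▸ Polynomial.map_dvd _ hdvd
  · rintro ⟨q, hq⟩
    have hmap : (f * signedLift ε q).map (Int.castRingHom (ZMod 2)) =
        ∑ i ∈ Finset.range (n + 1), X ^ i := by
      rw [Polynomial.map_mul, map_signedLift, hq]
    have hdeg : (f * signedLift ε q).natDegree ≤ n :=
      natDegree_mul_signedLift_le q hlead hq.symm
    have hbound (k : ℕ) : |(f * signedLift ε q).coeff k| ≤ 2 := by
      linarith [two_mul_abs_coeff_mul_signedLift_le q hroot k]
    obtain ⟨hL, hn⟩ := isLittlewood_and_natDegree_eq_of_map_eq_geom_sum hdeg hbound hmap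
    exact ⟨_, hL, hn, dvd_mul_right _ _⟩

theorem dvd_X_pow_sub_one_iff_orderOf_root_dvd {R : Type*} [CommRing R] {f : R[X]} {n : ℕ} :
    f ∣ X ^ n - 1 ↔ orderOf (AdjoinRoot.root f) ∣ n := by
  rw [← AdjoinRoot.mk_eq_zero, map_sub, map_pow, map_one, AdjoinRoot.mk_X, sub_eq_zero,
    orderOf_dvd_iff_pow_eq_one]

theorem dvd_geom_sum_iff_mul_orderOf_root_dvd {R : Type*} [CommRing R] {p : ℕ} [Fact p.Prime]
    [CharP R p] {f : R[X]} (hroot : f.IsRoot 1) (hcop : p.Coprime (orderOf (AdjoinRoot.root f)))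
    {m : ℕ} : f ∣ ∑ i ∈ Finset.range m, X ^ i ↔ p * orderOf (AdjoinRoot.root f) ∣ m := by
  have hgeom : (X - 1) * ∑ i ∈ Finset.range m, X ^ i = (X ^ m - 1 : R[X]) := mul_geom_sum X m
  constructor <;> intro h
  · have hp : p ∣ m := by
      simpa [eval_finsetSum, CharP.cast_eq_zero_iff R p] using (hroot.dvd h).eq_zero
    have horder : orderOf (AdjoinRoot.root f) ∣ m :=
      dvd_X_pow_sub_one_iff_orderOf_root_dvd.mp (hgeom ▸ h.mul_left (X - 1))
    exact hcop.mul_dvd_of_dvd_of_dvd hp horder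
  · set d := orderOf (AdjoinRoot.root f)
    have hf : f ∣ X ^ d - 1 := dvd_X_pow_sub_one_iff_orderOf_root_dvd.mpr dvd_rfl
    have hX : (X - 1 : R[X]) ∣ X ^ d - 1 := sub_one_dvd_pow_sub_one X d
    have hmul : (X - 1) * f ∣ (X - 1) * ∑ i ∈ Finset.range m, X ^ i :=
      calc (X - 1) * f ∣ (X ^ d - 1) ^ 2 := sq (X ^ d - 1 : R[X]) ▸ mul_dvd_mul hX hf
        _ ∣ (X ^ d - 1) ^ p := pow_dvd_pow _ (Fact.out : p.Prime).two_le
        _ = X ^ (p * d) - 1 := by rw [sub_pow_char, one_pow, ← pow_mul, mul_comm]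
        _ ∣ X ^ m - 1 := by
          obtain ⟨c, rfl⟩ := h
          exact pow_one_sub_dvd_pow_mul_sub_one X _ c
        _ = (X - 1) * ∑ i ∈ Finset.range m, X ^ i := hgeom.symm
    exact (C_1 (R := R) ▸ monic_X_sub_C 1).isRegular.left.dvd_cancel_left.mp hmul

theorem pow_8191_eq_one_of_charTwo {R : Type*} [CommRing R] [CharP R 2] {x : R}
    (hx : x ^ 14 - x ^ 12 + x ^ 3 + 1 = 0) : x ^ 8191 = 1 := by
  -- Repeated squaring: squares are termwise in characteristic `2`, then `hx` lowers the degree.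
  have h16 : x ^ 16 = x ^ 12 + x ^ 5 + x ^ 3 + x ^ 2 + 1 := by grind
  have h32 : x ^ 32 = x ^ 13 + x ^ 12 + x ^ 11 + x ^ 9 + x ^ 8 + x ^ 7 + x ^ 5 + x ^ 3 + x ^ 2 :=
    (pow_mul x 16 2).trans (by rw [h16]; grind)
  have h64 : x ^ 64 = x ^ 13 + x ^ 12 + x ^ 11 + x ^ 10 + x ^ 9 + x ^ 8 + x ^ 5 + x ^ 2 + x :=
    (pow_mul x 32 2).trans (by rw [h32]; grind)
  have h128 : x ^ 128 = x ^ 13 + x ^ 12 + x ^ 11 + x ^ 10 + x ^ 8 + x ^ 7 + x ^ 4 + x ^ 2 + x :=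
    (pow_mul x 64 2).trans (by rw [h64]; grind)
  have h256 : x ^ 256 = x ^ 13 + x ^ 12 + x ^ 11 + x ^ 5 + x :=
    (pow_mul x 128 2).trans (by rw [h128]; grind)
  have h512 : x ^ 512 = x ^ 13 + x ^ 11 + x ^ 10 + x ^ 9 + x ^ 8 + x ^ 7 + x ^ 6 + x ^ 5 + x ^ 3 +
      x + 1 :=
    (pow_mul x 256 2).trans (by rw [h256]; grind)
  have h1024 : x ^ 1024 = x ^ 9 + x ^ 5 + x ^ 4 + x + 1 :=
    (pow_mul x 512 2).trans (by rw [h512]; grind)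
  have h2048 : x ^ 2048 = x ^ 12 + x ^ 10 + x ^ 8 + x ^ 7 + x ^ 5 + x ^ 4 + x ^ 3 :=
    (pow_mul x 1024 2).trans (by rw [h1024]; grind)
  have h4096 : x ^ 4096 = x ^ 13 + x ^ 11 + x ^ 6 + x ^ 5 + x ^ 2 :=
    (pow_mul x 2048 2).trans (by rw [h2048]; grind)
  have h8192 : x ^ 8192 = x := (pow_mul x 4096 2).trans (by rw [h4096]; grind)
  have hinv : x * (x ^ 13 + x ^ 11 + x ^ 2) = 1 := by grind
  calc x ^ 8191 = x ^ 8191 * (x * (x ^ 13 + x ^ 11 + x ^ 2)) := by rw [hinv, mul_one]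
    _ = x ^ 8192 * (x ^ 13 + x ^ 11 + x ^ 2) := by rw [← mul_assoc, ← pow_succ]
    _ = 1 := by rw [h8192, hinv]

theorem orderOf_root_X14_sub_X12_add_X3_add_1 :
    orderOf (AdjoinRoot.root (X ^ 14 - X ^ 12 + X ^ 3 + 1 : (ZMod 2)[X])) = 8191 := by
  set f : (ZMod 2)[X] := X ^ 14 - X ^ 12 + X ^ 3 + 1 with hf
  have hdeg : f.natDegree = 14 := by rw [hf]; compute_degree!
  have : Fact (Nat.Prime 8191) := ⟨by norm_num⟩
  have : CharP (AdjoinRoot f) 2 :=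
    charP_of_injective_ringHom (AdjoinRoot.of.injective_of_degree_ne_zero
      (degree_ne_of_natDegree_ne (by rw [hdeg]; decide))) 2
  refine orderOf_eq_prime (pow_8191_eq_one_of_charTwo ?_) fun hone ↦ ?_
  · simpa [hf] using AdjoinRoot.mk_self (f := f)
  · have hdvd : f ∣ X - C 1 := by
      rw [← AdjoinRoot.mk_eq_zero, map_sub, AdjoinRoot.mk_X, hone, map_one, map_one, sub_self]
    have hle := natDegree_le_of_dvd hdvd (X_sub_C_ne_zero 1)
    rw [hdeg, natDegree_X_sub_C] at hle
    lia

theorem sum_abs_coeff_X14_sub_X12_add_X3_add_1_le :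
    ∑ i ∈ (X ^ 14 - X ^ 12 + X ^ 3 + 1 : ℤ[X]).support,
      |(X ^ 14 - X ^ 12 + X ^ 3 + 1 : ℤ[X]).coeff i| ≤ 4 := by
  have hdeg : (X ^ 14 - X ^ 12 + X ^ 3 + 1 : ℤ[X]).natDegree < 15 :=
    Nat.lt_succ_of_le (by compute_degree)
  refine (Finset.sum_le_sum_of_subset_of_nonneg (supp_subset_range hdeg)
    fun _ _ _ ↦ abs_nonneg _).trans ?_
  simp [Finset.sum_range_succ, coeff_one, coeff_X_pow]

theorem minimal_littlewood_multiple_of_X14_sub_X12_add_X3_add_1_general {n : ℕ} :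
    (∃ L : ℤ[X], IsLittlewood L ∧ L.natDegree = n ∧ (X ^ 14 - X ^ 12 + X ^ 3 + 1 : ℤ[X]) ∣ L) ↔
      16382 ∣ n + 1 := by
  have hroot : (X ^ 14 - X ^ 12 + X ^ 3 + 1 : ℤ[X]).IsRoot (-1 : ℤˣ) := by simp
  have hmonic : (X ^ 14 - X ^ 12 + X ^ 3 + 1 : ℤ[X]).Monic := by monicity!
  have hroot_zmod : (X ^ 14 - X ^ 12 + X ^ 3 + 1 : (ZMod 2)[X]).IsRoot 1 := by
    simpa using CharTwo.add_self_eq_zero (1 : ZMod 2)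
  have hcop : Nat.Coprime 2
      (orderOf (AdjoinRoot.root (X ^ 14 - X ^ 12 + X ^ 3 + 1 : (ZMod 2)[X]))) := by
    rw [orderOf_root_X14_sub_X12_add_X3_add_1]
    norm_num
  rw [exists_isLittlewood_multiple_iff_dvd_geom_sum hroot (hmonic.leadingCoeff ▸ odd_one)
    sum_abs_coeff_X14_sub_X12_add_X3_add_1_le]
  simp only [Polynomial.map_add, Polynomial.map_sub, Polynomial.map_pow, map_X, Polynomial.map_one]
  rw [dvd_geom_sum_iff_mul_orderOf_root_dvd hroot_zmod hcop,
    orderOf_root_X14_sub_X12_add_X3_add_1]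

theorem minimal_littlewood_multiple_of_X14_sub_X12_add_X3_add_1 :
    (∃ L : Polynomial ℤ, IsLittlewood L ∧ L.natDegree = 16381 ∧
      (X ^ 14 - X ^ 12 + X ^ 3 + 1 : Polynomial ℤ) ∣ L) ∧
    (∀ L : Polynomial ℤ, IsLittlewood L →
      (X ^ 14 - X ^ 12 + X ^ 3 + 1 : Polynomial ℤ) ∣ L → 16381 ≤ L.natDegree) := by
  refine ⟨minimal_littlewood_multiple_of_X14_sub_X12_add_X3_add_1_general.mpr dvd_rfl,
    fun L hL hdvd ↦ ?_⟩
  exact Nat.le_of_succ_le_succ <| Nat.le_of_dvd L.natDegree.succ_pos <|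
    minimal_littlewood_multiple_of_X14_sub_X12_add_X3_add_1_general.mp ⟨L, hL, rfl, hdvd⟩
end

section
/- If the quadrinomial X^15 + X^8 + X^6 + 1 divides a Littlewood polynomial L, then deg L ≥ 32765. -/
open Polynomial

/-!
Modulo 2 a Littlewood polynomial of degree `n` is `1 + X + ⋯ + X ^ n = (X ^ (n + 1) - 1) / (X - 1)`.
It is therefore a multiple of `f` exactly when `X ^ (n + 1) = 1` modulo `(X - 1) * f`, that is, when
the order of `X` modulo `(X - 1) * f` divides `n + 1`. For `f = X ^ 15 + X ^ 8 + X ^ 6 + 1` this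
order is `32766 = 2 * 3 * 43 * 127`, as one checks by computing the powers of `X` with exponents
`32766` and `32766 / p` for `p = 2, 3, 43, 127`.
-/

open AdjoinRoot

section

variable {R : Type*} [CommRing R]

theorem dvd_geom_sum_iff_orderOf_root_dvd {f : R[X]} {n : ℕ} :
    f ∣ ∑ i ∈ Finset.range n, X ^ i ↔ orderOf (root ((X - 1) * f)) ∣ n := by
  have hreg : IsLeftRegular (X - 1 : R[X]) := by
    simpa using (monic_X_sub_C (1 : R)).isRegular.left
  rw [orderOf_dvd_iff_pow_eq_one, ← sub_eq_zero, ← mk_X, ← map_pow, ← map_one (mk _), ← map_sub,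
    mk_eq_zero, ← mul_geom_sum, hreg.dvd_cancel_left]

theorem mk_ne_mk_of_natDegree_lt {f p q : R[X]} (hf : f.Monic) (hqp : q.natDegree < p.natDegree)
    (hpf : p.natDegree < f.natDegree) : mk f p ≠ mk f q := by
  have hdeg : (p - q).natDegree = p.natDegree := natDegree_sub_eq_left_of_natDegree_lt hqp
  have hne : p - q ≠ 0 := ne_zero_of_natDegree_gt (hdeg ▸ hqp)
  rw [← sub_ne_zero, ← map_sub]
  exact mk_ne_zero_of_natDegree_lt hf hne (hdeg ▸ hpf)

end

/-- The product of `X - 1` and the quadrinomial `X ^ 15 + X ^ 8 + X ^ 6 + 1` over `𝔽₂`. The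
quadrinomial divides `1 + X + ⋯ + X ^ (n - 1)` if and only if `X ^ n = 1` modulo this product. -/
noncomputable def orderModulus : (ZMod 2)[X] :=
  (X - 1) * (X ^ 15 + X ^ 8 + X ^ 6 + 1)

namespace orderModulus

section PowersOfRoot

variable {R : Type*} [CommRing R] [CharP R 2] {a : R}
  (ha : (a - 1) * (a ^ 15 + a ^ 8 + a ^ 6 + 1) = 0)

include ha

theorem pow_258_eq : a ^ 258 = a ^ 15 + a ^ 9 + a ^ 7 + a ^ 6 + a ^ 4 + a ^ 3 + a ^ 2 := by
  grind

theorem pow_762_eq : a ^ 762 = a ^ 15 + a ^ 13 + a ^ 9 + a ^ 6 + a ^ 5 + a ^ 2 + 1 := by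
  grind

theorem pow_341_eq : a ^ 341 = a ^ 15 + a ^ 11 + a ^ 10 + a ^ 6 + a ^ 5 + a ^ 4 + 1 := by
  grind

theorem pow_5461_eq : a ^ 5461 = a ^ 15 + a ^ 10 + a ^ 7 + a ^ 3 + a ^ 2 := by
  -- The 16th power is additive in characteristic 2, so that of `a ^ 341` has only seven terms.
  rw [show a ^ 5461 = (a ^ 341) ^ 16 * a ^ 5 by ring, pow_341_eq ha]
  grind

theorem pow_10922_eq : a ^ 10922 =
    a ^ 14 + a ^ 13 + a ^ 12 + a ^ 11 + a ^ 9 + a ^ 7 + a ^ 6 + a ^ 5 + a ^ 4 + a + 1 := by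
  rw [pow_mul a 5461 2, pow_5461_eq ha]
  grind

theorem pow_16383_eq : a ^ 16383 = a ^ 15 + a ^ 8 + a ^ 6 := by
  rw [pow_mul a 5461 3, pow_5461_eq ha]
  grind

theorem pow_32766_eq_one : a ^ 32766 = 1 := by
  rw [pow_mul a 16383 2, pow_16383_eq ha]
  grind

end PowersOfRoot

theorem monic : orderModulus.Monic := by
  rw [orderModulus]
  monicity!

theorem natDegree_eq : orderModulus.natDegree = 16 := by
  rw [orderModulus]
  compute_degree!

instance charP_adjoinRoot : CharP (AdjoinRoot orderModulus) 2 :=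
  have hdegree : orderModulus.degree ≠ 0 := degree_ne_of_natDegree_ne (by simp [natDegree_eq])
  charP_of_injective_algebraMap (of.injective_of_degree_ne_zero hdegree) 2

theorem root_relation :
    (root orderModulus - 1) *
      (root orderModulus ^ 15 + root orderModulus ^ 8 + root orderModulus ^ 6 + 1) = 0 := by
  have hself : mk orderModulus ((X - 1) * (X ^ 15 + X ^ 8 + X ^ 6 + 1)) = 0 := mk_self
  simpa using hself

theorem mk_ne_mk_one {p : (ZMod 2)[X]} {d : ℕ} (hp : p.natDegree = d) (hd : d ∈ Set.Ioo 0 16) :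
    mk orderModulus p ≠ mk orderModulus 1 :=
  mk_ne_mk_of_natDegree_lt monic (by simpa [hp] using hd.1)
    (by simpa [hp, natDegree_eq] using hd.2)

theorem orderOf_root : orderOf (root orderModulus) = 32766 := by
  have ne_258 : root orderModulus ^ 258 ≠ 1 := by
    rw [pow_258_eq root_relation]
    simp only [← mk_X, ← map_pow, ← map_add, ← map_one (mk orderModulus)]
    exact mk_ne_mk_one (d := 15) (by compute_degree!) (by norm_num)
  have ne_762 : root orderModulus ^ 762 ≠ 1 := by
    rw [pow_762_eq root_relation]
    simp only [← mk_X, ← map_pow, ← map_add, ← map_one (mk orderModulus)]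
    exact mk_ne_mk_one (d := 15) (by compute_degree!) (by norm_num)
  have ne_10922 : root orderModulus ^ 10922 ≠ 1 := by
    rw [pow_10922_eq root_relation]
    simp only [← mk_X, ← map_pow, ← map_add, ← map_one (mk orderModulus)]
    exact mk_ne_mk_one (d := 14) (by compute_degree!) (by norm_num)
  have ne_16383 : root orderModulus ^ 16383 ≠ 1 := by
    rw [pow_16383_eq root_relation]
    simp only [← mk_X, ← map_pow, ← map_add, ← map_one (mk orderModulus)]
    exact mk_ne_mk_one (d := 15) (by compute_degree!) (by norm_num)
  refine orderOf_eq_of_pow_and_pow_div_prime (by norm_num) (pow_32766_eq_one root_relation) ?_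
  intro p hp hp_dvd
  have hp_mem : p ∈ Nat.primeFactorsList 32766 :=
    (Nat.mem_primeFactorsList (by norm_num)).mpr ⟨hp, hp_dvd⟩
  simp only [Nat.primeFactorsList_ofNat, List.mem_cons, List.not_mem_nil, or_false] at hp_mem
  rcases hp_mem with rfl | rfl | rfl | rfl
  exacts [ne_16383, ne_10922, ne_762, ne_258]

end orderModulus

theorem map_intCast_zmod_two_eq_geom_sum {L : ℤ[X]} (hL : ∀ i ≤ L.natDegree, Odd (L.coeff i)) :
    L.map (Int.castRingHom (ZMod 2)) = ∑ i ∈ Finset.range (L.natDegree + 1), X ^ i := by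
  conv_lhs => rw [L.as_sum_range]
  rw [Polynomial.map_sum]
  refine Finset.sum_congr rfl fun i hi => ?_
  have hcoeff : (L.coeff i : ZMod 2) = 1 :=
    (hL i (Finset.mem_range_succ_iff.mp hi)).intCast_zmod_two
  rw [map_monomial, eq_intCast, hcoeff, monomial_one_right_eq_X_pow]

theorem IsLittlewood.odd_coeff {L : ℤ[X]} (hL : IsLittlewood L) {i : ℕ} (hi : i ≤ L.natDegree) :
    Odd (L.coeff i) := by
  rcases hL.2 i hi with h | h <;> rw [h] <;> decide

theorem littlewood_multiple_of_X15_X8_X6_1_has_large_degree_general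
    (L : ℤ[X]) (hL : ∀ i ≤ L.natDegree, Odd (L.coeff i))
    (hdvd : (X ^ 15 + X ^ 8 + X ^ 6 + 1 : (ZMod 2)[X]) ∣ L.map (Int.castRingHom (ZMod 2))) :
    32766 ∣ L.natDegree + 1 := by
  rw [← orderModulus.orderOf_root, orderModulus, ← dvd_geom_sum_iff_orderOf_root_dvd,
    ← map_intCast_zmod_two_eq_geom_sum hL]
  exact hdvd

theorem littlewood_multiple_of_X15_X8_X6_1_has_large_degree
    (L : Polynomial ℤ) (hL : IsLittlewood L)
    (hdvd : (X ^ 15 + X ^ 8 + X ^ 6 + 1 : Polynomial ℤ) ∣ L) :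
    32765 ≤ L.natDegree := by
  have h := littlewood_multiple_of_X15_X8_X6_1_has_large_degree_general L
    (fun _ => hL.odd_coeff) (by simpa using Polynomial.map_dvd (Int.castRingHom (ZMod 2)) hdvd)
  exact Nat.succ_le_succ_iff.mp (Nat.le_of_dvd (Nat.succ_pos _) h)
end

section
/- If P ∈ ℤ[X] is a product of cyclotomic polynomials and P(1) ≠ 0, then P divides some Newman polynomial. -/
open Polynomial

/-- A Newman polynomial: an integer polynomial with all coefficients `0` or `1`
and constant term `1`. -/
def IsNewman (P : Polynomial ℤ) : Prop :=
  P.coeff 0 = 1 ∧ ∀ i, P.coeff i = 0 ∨ P.coeff i = 1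

/-- A product of cyclotomic polynomials `Φ_n`, `n ≥ 1` (possibly empty). -/
def IsCyclotomicProduct (P : Polynomial ℤ) : Prop :=
  ∃ l : List ℕ, (∀ n ∈ l, 1 ≤ n) ∧ P = (l.map fun n => cyclotomic n ℤ).prod

/-!
If `N` is a Newman polynomial of degree less than `t` and `M` is any Newman polynomial, then
`N(X) M(X ^ t)` is again Newman: the copies of `N` do not overlap. If moreover `t ≡ 1 [MOD n]` and
`Q ∣ M := 1 + X + ⋯ + X ^ (n - 1)`, then `X ^ t ≡ X` modulo `X ^ n - 1`, a multiple of `Q`, so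
`Q ∣ M(X ^ t)`. Hence a Newman multiple of `P` yields one of `P * Q`, and `Φ_n` is such a `Q` for
every `n > 1`; the factor `Φ_1` is excluded by `P(1) ≠ 0`.
-/

section

variable {R : Type*}

theorem coeff_mul_expand_of_natDegree_lt [CommSemiring R] {p : R[X]} {t : ℕ}
    (ht : p.natDegree < t) (q : R[X]) (i : ℕ) :
    (p * expand R t q).coeff i = p.coeff (i % t) * q.coeff (i / t) := by
  have ht_pos : 0 < t := Nat.zero_lt_of_lt ht
  rw [coeff_mul, Finset.sum_eq_single (i % t, t * (i / t)), coeff_expand_mul' ht_pos]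
  · rintro ⟨a, b⟩ hab hne
    rw [Finset.HasAntidiagonal.mem_antidiagonal] at hab
    rw [coeff_expand ht_pos]
    split_ifs with hb
    · obtain ⟨c, rfl⟩ := hb
      have ha : t ≤ a := by
        by_contra! ha
        refine hne ?_
        simp [← hab, Nat.add_mul_div_left, Nat.mod_eq_of_lt ha, Nat.div_eq_of_lt ha, ht_pos]
      rw [coeff_eq_zero_of_natDegree_lt (ht.trans_le ha), zero_mul]
    · rw [mul_zero]
  · simp [Nat.mod_add_div]

variable [CommRing R]

theorem pow_sub_one_dvd_pow_sub_pow_of_modEq {n s t : ℕ} (h : s ≡ t [MOD n]) (x : R) :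
    x ^ n - 1 ∣ x ^ s - x ^ t := by
  let π := Ideal.Quotient.mk (Ideal.span {x ^ n - 1})
  have hπ (a b : R) : π a = π b ↔ x ^ n - 1 ∣ a - b :=
    Ideal.Quotient.eq.trans Ideal.mem_span_singleton
  have hπ_pow : π x ^ n = 1 := by simpa using (hπ (x ^ n) 1).2 dvd_rfl
  rw [← hπ, map_pow, map_pow]
  exact pow_eq_pow_of_modEq h hπ_pow

theorem dvd_expand_iff_of_modEq {p q : R[X]} {n s t : ℕ} (hq : q ∣ X ^ n - 1)
    (h : s ≡ t [MOD n]) : q ∣ expand R s p ↔ q ∣ expand R t p := by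
  refine dvd_iff_dvd_of_dvd_sub (hq.trans ?_)
  calc (X ^ n - 1 : R[X]) ∣ X ^ s - X ^ t := pow_sub_one_dvd_pow_sub_pow_of_modEq h X
    _ ∣ expand R s p - expand R t p := by
      simpa only [expand_eq_comp_X_pow, eval_map, comp] using
        sub_dvd_eval_sub (X ^ s) (X ^ t) (p.map C)

end

theorem isNewman_geom_sum {n : ℕ} (hn : n ≠ 0) : IsNewman (∑ i ∈ Finset.range n, X ^ i) := by
  have hcoeff (i : ℕ) :
      (∑ j ∈ Finset.range n, X ^ j : ℤ[X]).coeff i = if i < n then 1 else 0 := by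
    simp [coeff_X_pow]
  refine ⟨by rw [hcoeff, if_pos (Nat.pos_of_ne_zero hn)], fun i => ?_⟩
  rw [hcoeff]
  split_ifs <;> simp

theorem isNewman_one : IsNewman 1 := by
  simpa using isNewman_geom_sum one_ne_zero

theorem IsNewman.mul_expand {M N : ℤ[X]} (hN : IsNewman N) (hM : IsNewman M) {t : ℕ}
    (ht : N.natDegree < t) : IsNewman (N * expand ℤ t M) := by
  have hcoeff := coeff_mul_expand_of_natDegree_lt ht M
  refine ⟨by simp [hcoeff, hN.1, hM.1], fun i => ?_⟩
  rw [hcoeff]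
  rcases hN.2 (i % t) with h | h <;> rcases hM.2 (i / t) with h' | h' <;> simp [h, h']

theorem exists_isNewman_mul_dvd {P Q N : ℤ[X]} (hN : IsNewman N) (hP : P ∣ N) {n : ℕ} (hn : n ≠ 0)
    (hQ : Q ∣ ∑ i ∈ Finset.range n, X ^ i) : ∃ N' : ℤ[X], IsNewman N' ∧ P * Q ∣ N' := by
  have hdeg : N.natDegree < n * N.natDegree + 1 :=
    Nat.lt_succ_of_le (Nat.le_mul_of_pos_left _ (Nat.pos_of_ne_zero hn))
  have hQ_X_pow : Q ∣ X ^ n - 1 := hQ.trans ⟨X - 1, (geom_sum_mul X n).symm⟩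
  have hmod : n * N.natDegree + 1 ≡ 1 [MOD n] := by simp [Nat.ModEq]
  refine ⟨_, hN.mul_expand (isNewman_geom_sum hn) hdeg, mul_dvd_mul hP ?_⟩
  rwa [dvd_expand_iff_of_modEq hQ_X_pow hmod, expand_one]

theorem exists_isNewman_list_prod_dvd (l : List ℤ[X])
    (hl : ∀ Q ∈ l, ∃ n ≠ 0, Q ∣ ∑ i ∈ Finset.range n, X ^ i) :
    ∃ N : ℤ[X], IsNewman N ∧ l.prod ∣ N := by
  induction l with
  | nil => exact ⟨1, isNewman_one, by simp⟩
  | cons Q l ih =>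
    obtain ⟨⟨n, hn, hQ⟩, hl⟩ := List.forall_mem_cons.1 hl
    obtain ⟨N, hN, hdvd⟩ := ih hl
    rw [List.prod_cons, mul_comm]
    exact exists_isNewman_mul_dvd hN hdvd hn hQ

theorem cyclotomic_product_has_newman_multiple
    (P : Polynomial ℤ) (hP : IsCyclotomicProduct P) (h1 : P.eval 1 ≠ 0) :
    ∃ N : Polynomial ℤ, IsNewman N ∧ P ∣ N := by
  obtain ⟨l, hl, rfl⟩ := hP
  refine exists_isNewman_list_prod_dvd _ (List.forall_mem_map.2 fun n hn => ?_)
  have hn_ne_one : n ≠ 1 := by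
    rintro rfl
    have hdvd := List.dvd_prod (List.mem_map_of_mem (f := fun n => cyclotomic n ℤ) hn)
    exact h1 (eval_eq_zero_of_dvd_of_eval_eq_zero hdvd (by simp))
  exact ⟨n, Nat.one_le_iff_ne_zero.1 (hl n hn),
    cyclotomic_dvd_geom_sum_of_dvd ℤ dvd_rfl hn_ne_one⟩
end

section
/- Let P ∈ ℤ[X] be a nonzero polynomial and let n ≥ 1 be an integer. Then the product Φ_n(X)·P(X) divides some Littlewood polynomial if and only if P divides some Littlewood polynomial, where Φ_n denotes the n-th cyclotomic polynomial. -/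
open Polynomial

/-!
If `A` has degree less than `d`, the coefficient of `A(X) * B(X ^ d)` at `i = d * q + r`, with
`r < d`, is `A.coeff r * B.coeff q`. Hence `L(X) * B(X ^ d)` is a Littlewood multiple of `L`
whenever `L` and `B` are Littlewood and `d = deg L + 1`. Taking `B = 1 + X + ⋯ + X ^ (n - 1)`
multiplies `deg L + 1` by `n`; if `Q` is the result, a second step with `B = X - 1` multiplies `Q`
by `X ^ (n * d) - 1`, which is divisible by `X ^ n - 1` and hence by `Φ_n`.
-/

section Coefficients

variable {R : Type*}

theorem coeff_mul_expand_of_natDegree_lt_s11 [CommSemiring R] {A : R[X]} {d : ℕ}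
    (hA : A.natDegree < d) (B : R[X]) (i : ℕ) :
    (A * expand R d B).coeff i = A.coeff (i % d) * B.coeff (i / d) := by
  have hd : 0 < d := by omega
  induction B using Polynomial.induction_on' with
  | add B₁ B₂ h₁ h₂ => rw [map_add, mul_add, coeff_add, h₁, h₂, coeff_add, mul_add]
  | monomial q b =>
    rw [expand_monomial, ← C_mul_X_pow_eq_monomial, ← mul_assoc, coeff_mul_X_pow', coeff_mul_C,
      coeff_monomial]
    rcases lt_trichotomy q (i / d) with hlt | rfl | hgt
    · have hqi : (q + 1) * d ≤ i := (Nat.le_div_iff_mul_le hd).mp hlt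
      have hdi : A.natDegree < i - q * d := by rw [add_one_mul] at hqi; omega
      simp [hlt.ne, coeff_eq_zero_of_natDegree_lt hdi]
    · rw [if_pos (Nat.div_mul_le_self i d), if_pos rfl, Nat.mod_eq_sub_div_mul]
    · rw [if_neg ((Nat.div_lt_iff_lt_mul hd).mp hgt).not_ge, if_neg hgt.ne', mul_zero]

theorem natDegree_mul_expand_add_one [CommSemiring R] [NoZeroDivisors R] {A B : R[X]}
    (hA : A ≠ 0) (hB : B ≠ 0) :
    (A * expand R (A.natDegree + 1) B).natDegree + 1 =
      (A.natDegree + 1) * (B.natDegree + 1) := by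
  have hB' : expand R (A.natDegree + 1) B ≠ 0 := (expand_ne_zero (Nat.succ_pos _)).mpr hB
  rw [natDegree_mul hA hB', natDegree_expand]
  ring

variable [Semiring R]

theorem coeff_geom_sum_X (n i : ℕ) :
    (∑ j ∈ Finset.range n, (X : R[X]) ^ j).coeff i = if i < n then 1 else 0 := by
  simp [coeff_X_pow]

theorem natDegree_geom_sum_X_succ [Nontrivial R] (n : ℕ) :
    (∑ j ∈ Finset.range (n + 1), (X : R[X]) ^ j).natDegree = n := by
  refine natDegree_eq_of_le_of_coeff_ne_zero (natDegree_le_iff_coeff_eq_zero.mpr fun i hi => ?_) ?_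
  · rw [coeff_geom_sum_X, if_neg (by omega)]
  · rw [coeff_geom_sum_X, if_pos n.lt_succ_self]
    exact one_ne_zero

end Coefficients

theorem isLittlewood_X_sub_one : IsLittlewood (X - 1) := by
  refine ⟨X_sub_C_ne_zero 1, fun i hi => ?_⟩
  rw [← C_1, natDegree_X_sub_C] at hi
  interval_cases i <;> simp [coeff_one]

theorem isLittlewood_geom_sum_X_succ (n : ℕ) :
    IsLittlewood (∑ j ∈ Finset.range (n + 1), X ^ j) := by
  refine ⟨(monic_geom_sum_X n.succ_ne_zero).ne_zero, fun i hi => Or.inl ?_⟩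
  rw [natDegree_geom_sum_X_succ] at hi
  rw [coeff_geom_sum_X, if_pos (Nat.lt_succ_of_le hi)]

namespace IsLittlewood

variable {A B L : ℤ[X]}

theorem mul_expand (hA : IsLittlewood A) (hB : IsLittlewood B) :
    IsLittlewood (A * expand ℤ (A.natDegree + 1) B) := by
  refine ⟨mul_ne_zero hA.1 ((expand_ne_zero A.natDegree.succ_pos).mpr hB.1), fun i hi => ?_⟩
  have hdiv : i / (A.natDegree + 1) < B.natDegree + 1 := by
    rw [Nat.div_lt_iff_lt_mul A.natDegree.succ_pos, mul_comm,
      ← natDegree_mul_expand_add_one hA.1 hB.1]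
    exact Nat.lt_succ_of_le hi
  have hmod : i % (A.natDegree + 1) < A.natDegree + 1 := Nat.mod_lt i A.natDegree.succ_pos
  rw [coeff_mul_expand_of_natDegree_lt_s11 A.natDegree.lt_succ_self]
  rcases hA.2 _ (Nat.le_of_lt_succ hmod) with ha | ha <;>
    rcases hB.2 _ (Nat.le_of_lt_succ hdiv) with hb | hb <;> simp [ha, hb]

theorem exists_X_pow_sub_one_mul_dvd (hL : IsLittlewood L) {n : ℕ} (hn : n ≠ 0) :
    ∃ M : ℤ[X], IsLittlewood M ∧ (X ^ n - 1) * L ∣ M := by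
  obtain ⟨k, rfl⟩ := Nat.exists_eq_succ_of_ne_zero hn
  have hG := isLittlewood_geom_sum_X_succ k
  set Q := L * expand ℤ (L.natDegree + 1) (∑ j ∈ Finset.range (k + 1), X ^ j)
  have hQ : IsLittlewood Q := hL.mul_expand hG
  have hdeg : k + 1 ∣ Q.natDegree + 1 := by
    rw [natDegree_mul_expand_add_one hL.1 hG.1, natDegree_geom_sum_X_succ]
    exact dvd_mul_left _ _
  refine ⟨_, hQ.mul_expand isLittlewood_X_sub_one, ?_⟩
  rw [map_sub, expand_X, map_one, mul_comm Q]
  exact mul_dvd_mul (dvd_pow_sub_one_of_dvd hdeg) (dvd_mul_right L _)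

end IsLittlewood

theorem cyclotomic_factor_littlewood_multiple
    (P : Polynomial ℤ) (hP : P ≠ 0) (n : ℕ) (hn : 1 ≤ n) :
    (∃ L : Polynomial ℤ, IsLittlewood L ∧ cyclotomic n ℤ * P ∣ L) ↔
      (∃ L : Polynomial ℤ, IsLittlewood L ∧ P ∣ L) := by
  constructor
  · rintro ⟨L, hL, hPL⟩
    exact ⟨L, hL, dvd_of_mul_left_dvd hPL⟩
  · rintro ⟨L, hL, hPL⟩
    obtain ⟨M, hM, hLM⟩ := hL.exists_X_pow_sub_one_mul_dvd (Nat.one_le_iff_ne_zero.mp hn)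
    exact ⟨M, hM, (mul_dvd_mul (cyclotomic.dvd_X_pow_sub_one n ℤ) hPL).trans hLM⟩
end

section
/- Let P ∈ ℤ[X] be a nonzero polynomial and let n ≥ 2 be an integer. Then the product Φ_n(X)·P(X) divides some Newman polynomial if and only if P divides some Newman polynomial, where Φ_n denotes the n-th cyclotomic polynomial. -/
open Polynomial

/-!
If `A` and `B` are Newman polynomials and `deg A < m`, then `A(X) * B(X ^ m)` is Newman, since
its coefficients are read off from the base-`m` digits `k = k % m + m * (k / m)` of the exponent.
If moreover `m ≡ 1` modulo `n`, then `B(X ^ m) ≡ B(X)` modulo `X ^ n - 1`. So with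
`B = 1 + X + ⋯ + X ^ (n - 1)`, which divides `X ^ n - 1`, every divisor of `B` divides `B(X ^ m)`,
and a Newman multiple `A` of `P` yields the Newman multiple `A(X) * B(X ^ m)` of `Φ_n * P`.
-/

theorem coeff_mul_expand {R : Type*} [CommSemiring R] {f : R[X]} {m : ℕ} (hf : f.natDegree < m)
    (g : R[X]) (k : ℕ) :
    (f * expand R m g).coeff k = f.coeff (k % m) * g.coeff (k / m) := by
  have hm : 0 < m := by omega
  rw [coeff_mul, Finset.sum_eq_single (k % m, m * (k / m))]
  · rw [coeff_expand_mul' hm]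
  · rintro ⟨i, j⟩ hij hne
    rw [Finset.HasAntidiagonal.mem_antidiagonal] at hij
    rw [coeff_expand hm]
    split_ifs with hmj
    · obtain ⟨q, rfl⟩ := hmj
      have hi : f.natDegree < i := by
        by_contra! hi
        have hdigits : k / m = q ∧ k % m = i :=
          (Nat.div_mod_unique hm).2 ⟨hij, by omega⟩
        exact hne (by rw [hdigits.1, hdigits.2])
      rw [coeff_eq_zero_of_natDegree_lt hi, zero_mul]
    · rw [mul_zero]
  · intro hk
    exact absurd (Finset.HasAntidiagonal.mem_antidiagonal.2 (Nat.mod_add_div k m)) hk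

theorem X_pow_sub_one_dvd_expand_sub_expand {R : Type*} [CommRing R] {n a b : ℕ}
    (hab : a ≡ b [MOD n]) (f : R[X]) : X ^ n - 1 ∣ expand R a f - expand R b f := by
  have hX : AdjoinRoot.root (X ^ n - 1 : R[X]) ^ n = 1 := by
    rw [← sub_eq_zero, ← AdjoinRoot.mk_X, ← map_pow, ← map_one (AdjoinRoot.mk _), ← map_sub,
      AdjoinRoot.mk_self]
  have hpow : AdjoinRoot.root (X ^ n - 1 : R[X]) ^ a = AdjoinRoot.root (X ^ n - 1) ^ b :=
    pow_eq_pow_of_modEq hab hX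
  rw [← AdjoinRoot.mk_eq_mk]
  simp only [← AdjoinRoot.aeval_eq, expand_aeval, hpow]

theorem dvd_expand_iff_of_dvd_X_pow_sub_one {R : Type*} [CommRing R] {Q : R[X]} {n m : ℕ}
    (hQ : Q ∣ X ^ n - 1) (hm : m ≡ 1 [MOD n]) (f : R[X]) : Q ∣ expand R m f ↔ Q ∣ f := by
  have hsub := hQ.trans (X_pow_sub_one_dvd_expand_sub_expand hm f)
  rw [expand_one] at hsub
  exact dvd_iff_dvd_of_dvd_sub hsub

theorem IsNewman.mul_expand_s12 {A B : ℤ[X]} (hA : IsNewman A) (hB : IsNewman B) {m : ℕ}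
    (hm : A.natDegree < m) : IsNewman (A * expand ℤ m B) := by
  refine ⟨?_, fun k => ?_⟩
  · rw [coeff_mul_expand hm, Nat.zero_mod, Nat.zero_div, hA.1, hB.1, mul_one]
  · rw [coeff_mul_expand hm]
    rcases hA.2 (k % m) with hAk | hAk
    · rw [hAk, zero_mul]
      exact Or.inl rfl
    · rw [hAk, one_mul]
      exact hB.2 (k / m)

theorem cyclotomic_factor_newman_multiple_general (P : ℤ[X]) {Q : ℤ[X]} {n : ℕ} (hn : n ≠ 0)
    (hQ : Q ∣ ∑ i ∈ Finset.range n, X ^ i) :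
    (∃ N : ℤ[X], IsNewman N ∧ Q * P ∣ N) ↔ (∃ N : ℤ[X], IsNewman N ∧ P ∣ N) := by
  constructor
  · rintro ⟨N, hN, hQP⟩
    exact ⟨N, hN, dvd_of_mul_left_dvd hQP⟩
  · rintro ⟨N, hN, hPN⟩
    have hdeg : N.natDegree < n * N.natDegree + 1 :=
      Nat.lt_succ_of_le (Nat.le_mul_of_pos_left _ (Nat.pos_of_ne_zero hn))
    have hmod : n * N.natDegree + 1 ≡ 1 [MOD n] := by
      rw [Nat.ModEq, Nat.mul_add_mod]
    have hQX : Q ∣ X ^ n - 1 := hQ.trans (Dvd.intro _ (geom_sum_mul X n))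
    refine ⟨_, hN.mul_expand_s12 (isNewman_geom_sum hn) hdeg, ?_⟩
    rw [mul_comm Q]
    exact mul_dvd_mul hPN ((dvd_expand_iff_of_dvd_X_pow_sub_one hQX hmod _).2 hQ)

theorem cyclotomic_factor_newman_multiple
    (P : Polynomial ℤ) (hP : P ≠ 0) (n : ℕ) (hn : 2 ≤ n) :
    (∃ N : Polynomial ℤ, IsNewman N ∧ cyclotomic n ℤ * P ∣ N) ↔
      (∃ N : Polynomial ℤ, IsNewman N ∧ P ∣ N) :=
  cyclotomic_factor_newman_multiple_general P (by omega)
    (cyclotomic_dvd_geom_sum_of_dvd ℤ dvd_rfl (by omega))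
end

section
/- Every Newman polynomial of degree at most 8 divides some Littlewood polynomial. -/
/-!
For monic `P` with coefficients `0` and `1`, one step of Euclidean division at most doubles the
coefficients of the dividend `F`. Hence, once the integer `b` exceeds all `2 ^ k * |F.coeff i|`,
where `F` has degree less than `deg P + k`, the remainder `R` has coefficients smaller than `b`
in absolute value, so `|R(b)| < b ^ deg P ≤ P(b)`. If `P(b) ∣ F(b)`, then `R(b) = 0`, which forces
`R = 0`. Thus `P ∣ F` follows from the divisibility of two explicit integers, and the theorem
reduces to exhibiting one Littlewood polynomial for each of the 256 Newman polynomials.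
-/

open Polynomial

theorem abs_eval_lt_pow_of_abs_coeff_lt {R : ℤ[X]} {b : ℤ} {n : ℕ}
    (hcoeff : ∀ i, |R.coeff i| < b) (hdeg : R.degree < n) : |R.eval b| < b ^ n := by
  have hb : 0 < b := (abs_nonneg _).trans_lt (hcoeff 0)
  rcases eq_or_ne R 0 with rfl | hR
  · simpa using pow_pos hb n
  rw [eval_eq_sum_range' ((natDegree_lt_iff_degree_lt hR).2 hdeg)]
  calc |∑ i ∈ Finset.range n, R.coeff i * b ^ i|
      ≤ ∑ i ∈ Finset.range n, |R.coeff i * b ^ i| := Finset.abs_sum_le_sum_abs _ _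
    _ ≤ ∑ i ∈ Finset.range n, (b - 1) * b ^ i := by
      gcongr with i
      rw [abs_mul, abs_of_pos (pow_pos hb i)]
      gcongr
      exact Int.le_sub_one_of_lt (hcoeff i)
    _ = b ^ n - 1 := by rw [← Finset.mul_sum, mul_geom_sum]
    _ < b ^ n := sub_one_lt _

theorem eval_ne_zero_of_abs_coeff_lt {R : ℤ[X]} {b : ℤ} (hcoeff : ∀ i, |R.coeff i| < b)
    (hR : R ≠ 0) : R.eval b ≠ 0 := by
  have hb : 0 < b := (abs_nonneg _).trans_lt (hcoeff 0)
  have htail : |R.eraseLead.eval b| < b ^ R.natDegree := by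
    refine abs_eval_lt_pow_of_abs_coeff_lt (fun i => ?_) ?_
    · rw [eraseLead_coeff]
      split_ifs
      · simpa using hb
      · exact hcoeff i
    · exact (degree_eraseLead_lt hR).trans_eq (degree_eq_natDegree hR)
  have hlead : b ^ R.natDegree ≤ |R.leadingCoeff * b ^ R.natDegree| := by
    rw [abs_mul, abs_of_pos (pow_pos hb R.natDegree)]
    exact le_mul_of_one_le_left (pow_pos hb _).le
      (Int.one_le_abs (leadingCoeff_ne_zero.2 hR))
  intro heval
  rw [← eraseLead_add_C_mul_X_pow R] at heval
  simp only [eval_add, eval_mul, eval_C, eval_pow, eval_X] at heval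
  rw [eq_neg_of_add_eq_zero_left heval, abs_neg] at htail
  exact htail.not_ge hlead

theorem pow_natDegree_le_eval {S : Type*} [Semiring S] [PartialOrder S] [IsOrderedRing S]
    {P : S[X]} (hmonic : P.Monic) (hnonneg : ∀ i, 0 ≤ P.coeff i) {b : S} (hb : 0 ≤ b) :
    b ^ P.natDegree ≤ P.eval b := by
  have hle := Finset.single_le_sum (f := fun i => P.coeff i * b ^ i)
    (fun i _ => mul_nonneg (hnonneg i) (pow_nonneg hb i)) (Finset.self_mem_range_succ P.natDegree)
  rwa [← eval_eq_sum_range, hmonic.coeff_natDegree, one_mul] at hle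

theorem degree_sub_coeff_mul_lt {S : Type*} [Ring S] {P F : S[X]} {k : ℕ} (hmonic : P.Monic)
    (hdeg : F.degree < (P.natDegree + (k + 1) : ℕ)) :
    (F - C (F.coeff (P.natDegree + k)) * (P * X ^ k)).degree <
      ((P.natDegree + k : ℕ) : WithBot ℕ) := by
  rw [degree_lt_iff_coeff_zero] at hdeg ⊢
  intro i hi
  rw [coeff_sub, coeff_C_mul, coeff_mul_X_pow', if_pos (by omega)]
  rcases hi.eq_or_lt with rfl | hi
  · simp [hmonic.coeff_natDegree]
  · rw [hdeg i (by omega), coeff_eq_zero_of_natDegree_lt (p := P) (by omega), mul_zero, sub_zero]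

theorem abs_coeff_sub_C_mul_le {S : Type*} [Ring S] [LinearOrder S] [IsOrderedRing S] {P : S[X]}
    (hP : ∀ i, |P.coeff i| ≤ 1) (F : S[X]) (c : S) (k i : ℕ) :
    |(F - C c * (P * X ^ k)).coeff i| ≤ |F.coeff i| + |c| := by
  have hshift : |(P * X ^ k).coeff i| ≤ 1 := by
    rw [coeff_mul_X_pow']
    split_ifs
    · exact hP (i - k)
    · simp
  rw [coeff_sub, coeff_C_mul]
  refine (abs_sub _ _).trans (add_le_add_right ?_ _)
  rw [abs_mul]
  exact mul_le_of_le_one_right (abs_nonneg c) hshift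

theorem dvd_of_eval_dvd_eval {P F : ℤ[X]} {b : ℤ} {k : ℕ} (hmonic : P.Monic)
    (hnonneg : ∀ i, 0 ≤ P.coeff i) (hle : ∀ i, P.coeff i ≤ 1)
    (hF : ∀ i, |F.coeff i| * 2 ^ k < b) (hdeg : F.degree < (P.natDegree + k : ℕ))
    (hdvd : P.eval b ∣ F.eval b) : P ∣ F := by
  induction k generalizing F with
  | zero =>
    simp only [pow_zero, mul_one] at hF
    have hb : 0 ≤ b := (abs_nonneg _).trans (hF 0).le
    have hlt : |F.eval b| < P.eval b :=
      (abs_eval_lt_pow_of_abs_coeff_lt hF hdeg).trans_le (pow_natDegree_le_eval hmonic hnonneg hb)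
    by_contra hndvd
    have hF0 : F ≠ 0 := fun h => hndvd (h ▸ dvd_zero P)
    exact eval_ne_zero_of_abs_coeff_lt hF hF0 (Int.eq_zero_of_abs_lt_dvd hdvd hlt)
  | succ k ih =>
    have hmul : P ∣ C (F.coeff (P.natDegree + k)) * (P * X ^ k) :=
      (dvd_mul_right P _).mul_left _
    have hPabs (i : ℕ) : |P.coeff i| ≤ 1 := abs_le.2 ⟨by linarith [hnonneg i], hle i⟩
    have hcoeff (i : ℕ) :
        |(F - C (F.coeff (P.natDegree + k)) * (P * X ^ k)).coeff i| * 2 ^ k < b := by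
      have hFi := hF i
      have hFlead := hF (P.natDegree + k)
      rw [pow_succ, ← mul_assoc] at hFi hFlead
      calc _ ≤ (|F.coeff i| + |F.coeff (P.natDegree + k)|) * 2 ^ k :=
            mul_le_mul_of_nonneg_right (abs_coeff_sub_C_mul_le hPabs F _ k i) (by positivity)
        _ < b := by linarith
    have heval :
        P.eval b ∣ (F - C (F.coeff (P.natDegree + k)) * (P * X ^ k)).eval b := by
      rw [eval_sub]
      exact dvd_sub hdvd (eval_dvd hmul)
    exact (dvd_sub_left hmul).1 (ih hcoeff (degree_sub_coeff_mul_lt hmonic hdeg) heval)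

section BitSum

variable {R S : Type*} [Semiring R] [Semiring S]

/-- The sum over `i < k` of `x ^ i` if bit `i` of `n` is set and of `c * x ^ i` otherwise. With
`x = X`, the choices `c = 0` and `c = -1` give the polynomials with coefficients `0, 1` and `±1`
respectively; with `x` an integer they give the values of these polynomials. The Horner form makes
the integer case cheap to evaluate. -/
def bitSum (c x : R) : ℕ → ℕ → R
  | 0, _ => 0
  | k + 1, n => (if n.testBit 0 then 1 else c) + x * bitSum c x k (n / 2)

theorem map_bitSum (f : R →+* S) (c x : R) (k n : ℕ) :
    f (bitSum c x k n) = bitSum (f c) (f x) k n := by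
  induction k generalizing n with
  | zero => simp only [bitSum, map_zero]
  | succ k ih => simp only [bitSum, map_add, map_mul, apply_ite f, map_one, ih]

theorem coeff_bitSum (c : R) (k n i : ℕ) :
    (bitSum (C c) X k n).coeff i = if i < k then if n.testBit i then 1 else c else 0 := by
  induction k generalizing n i with
  | zero => simp [bitSum]
  | succ k ih =>
    have hconst : (if n.testBit 0 then 1 else C c) = C (if n.testBit 0 then 1 else c) := by
      rw [apply_ite C, C_1]
    rw [bitSum, hconst, coeff_add]
    cases i with
    | zero => simp
    | succ i => simp [coeff_C_succ, coeff_X_mul, ih, Nat.testBit_succ]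

end BitSum

theorem eval_bitSum {R : Type*} [CommSemiring R] (b c : R) (k n : ℕ) :
    (bitSum (C c) X k n).eval b = bitSum c b k n := by
  simpa using map_bitSum (evalRingHom b) (C c) X k n

theorem isLittlewood_bitSum {k : ℕ} (hk : 0 < k) (n : ℕ) :
    IsLittlewood (bitSum (C (-1)) X k n) := by
  have hcoeff (i : ℕ) (hi : i < k) :
      (bitSum (C (-1 : ℤ)) X k n).coeff i = 1 ∨ (bitSum (C (-1 : ℤ)) X k n).coeff i = -1 := by
    rw [coeff_bitSum, if_pos hi]
    exact ite_eq_or_eq _ _ _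
  have hne : bitSum (C (-1 : ℤ)) X k n ≠ 0 := by
    intro h
    have h0 := hcoeff 0 hk
    rw [h] at h0
    simp at h0
  refine ⟨hne, fun i hi => hcoeff i (hi.trans_lt ?_)⟩
  rw [natDegree_lt_iff_degree_lt hne, degree_lt_iff_coeff_zero]
  intro j hj
  rw [coeff_bitSum, if_neg hj.not_gt]

theorem IsNewman.monic {P : ℤ[X]} (hP : IsNewman P) : P.Monic := by
  refine (hP.2 P.natDegree).resolve_left ?_
  rw [coeff_natDegree, leadingCoeff_eq_zero]
  rintro rfl
  simpa using hP.1

theorem IsNewman.dvd_bitSum {P : ℤ[X]} (hP : IsNewman P) {k n : ℕ}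
    (hdvd : P.eval (2 ^ (k + 1)) ∣ bitSum (-1) (2 ^ (k + 1)) k n) :
    P ∣ bitSum (C (-1)) X k n := by
  refine dvd_of_eval_dvd_eval (b := 2 ^ (k + 1)) (k := k) hP.monic (fun i => ?_) (fun i => ?_)
    (fun i => ?_) ?_ (by rwa [eval_bitSum])
  · rcases hP.2 i with h | h <;> simp [h]
  · rcases hP.2 i with h | h <;> simp [h]
  · have hcoeff : |(bitSum (C (-1 : ℤ)) X k n).coeff i| ≤ 1 := by
      rw [coeff_bitSum]
      split_ifs <;> simp
    calc |(bitSum (C (-1 : ℤ)) X k n).coeff i| * 2 ^ k ≤ 1 * 2 ^ k := by gcongr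
      _ < 2 ^ (k + 1) := by rw [one_mul]; gcongr <;> omega
  · rw [degree_lt_iff_coeff_zero]
    intro i hi
    rw [coeff_bitSum, if_neg (by omega)]

theorem IsNewman.exists_eq_bitSum {P : ℤ[X]} (hP : IsNewman P) {d : ℕ} (hdeg : P.natDegree ≤ d) :
    ∃ m < 2 ^ d, P = bitSum (C 0) X (d + 1) (2 * m + 1) := by
  refine ⟨Nat.ofBits fun i : Fin d => decide (P.coeff (i + 1) = 1), Nat.ofBits_lt_two_pow _, ?_⟩
  ext i
  rw [coeff_bitSum]
  cases i with
  | zero => simpa using hP.1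
  | succ i =>
    rw [Nat.testBit_succ, Nat.mul_add_div two_pos, Nat.div_eq_of_lt one_lt_two, add_zero]
    by_cases hi : i < d
    · rw [if_pos (Nat.succ_lt_succ hi), Nat.testBit_ofBits_lt _ i hi]
      rcases hP.2 (i + 1) with h | h <;> simp [h]
    · rw [if_neg (by omega), coeff_eq_zero_of_natDegree_lt (by omega)]

/-- A table of Littlewood multiples: the Newman polynomial `bitSum (C 0) X 9 (2 * m + 1)` divides
the Littlewood polynomial `bitSum (C (-1)) X N n`, where `n` is the entry at index `m` and `N` is
the number of binary digits of `n`. Each `N` is the least possible one: a Littlewood polynomial with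
`N` coefficients reduces modulo `2` to `(X ^ N - 1) / (X - 1)`, so if `P` divides it then `N` is a
multiple of the order of `X` modulo `(X - 1) * P` over the field with two elements, and every entry
attains that order. -/
def littlewoodMultiples : List ℕ :=
  [1, 3, 10, 7, 36, 80, 96, 15, 136, 18464, 42, 10296, 16746, 2142, 8786, 31, 528, 1114883,
   1109921848, 160305159, 1109542921, 557584420, 2070, 1214448144, 1190553, 153, 810584085,
   1252525511, 177933621, 1879462491, 1117815330, 63, 2080, 4756786782262190700, 8709,
   2667540295081553976, 292, 142722915, 2458502176322883962, 19504, 10257, 2819145023891, 170,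
   1219487, 2883509132026989798, 5765470856092867059, 16616, 649143094170153420,
   4852256158814347605, 524634, 3461929310245, 4637167757675755701, 155211690, 3171,
   5284315151535772960, 2383532561589090360, 2312086975070645066, 4776549873568813606, 1132874,
   8388667, 17170, 2382721741783376676, 585849293746228050, 127, 8256,
   86404688653201681780465361318937641996, 4991617128575214398690230893, 630627625726445475,
   85758573645118131733640834155163201599, 638605915, 11650555968877301355887052127761637509,
   98400526775661049517791107750908954608, 85746404989033415836589426944827757681,
   10725829651866047632071377147456963040, 44317629232532826419004951728521048127, 2545407638135,
   8388684, 18264223996, 95766846867941695162753095168851036037, 2613551578143,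
   5031781553147815527198540998, 53218781752231326168515939646648886019, 524370,
   108999486718313603557498027750359046424, 42894295949581303501028482580802145494,
   85826218442073531570817548393402944483, 20395238936582516117262162955173,
   10281843960132226067333545, 13376091311727602265488221818656495829,
   6290440614618139615129997887, 20451727845046324595282781785706,
   54851444643492224817892861003954165623, 106678827114576286792400598306843328786,
   45040695254729827, 2331, 85218413135825222442157499580399019583,
   88563223323432303609368597100489878893, 2145, 49598627714546971697969875651938022426,
   22986731365707575756573128011295, 11469790916578450810420836774968954898,
   133680876233601884305775226386912643664, 7492813774721296894180730938, 8709, 806711961,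
   127654012714006282401449830635914159648, 130618811745289601940555477962891269205,
   16035479867100932520696767387906257055, 19504048877, 131181, 54062231985634591,
   5738327333008547246883567648, 613080404301284550, 20322210249425207465608198334761,
   149183306978723996529013523874720602469, 536871027, 4093243501060,
   18880049263581100601199678897572764060, 74860400612271779650922294981303619807,
   91083613364856943827459226218978031503, 99833115098790448837756473637687403146, 10257,
   10979803291799960205752010, 88654047632325862620027527072534286527, 2222312331501,
   5033071157299312958153830963, 85749050635107903801575151920669265922, 255, 32896,
   4647782989328084480, 545283072,
   16623905406243865345843483273850261496338876971448040587771507969465520164871,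
   108610131169501564872464372661724023346376367001597160336369129508,
   10432860586901398880523984, 52894574055572418981533725566262113155025487958120813293,
   115210430168438153850214905430492337080944186707317072923071729695, 2184,
   15044538718970313446801787457225671942452412638946065833442326100917933750979, 142629525,
   19592, 15387038339732743854686422120284799196268566002650114729118798577729991181129,
   1504845419860004,
   33476613532715166457719999846268341692091585013329705488141411189614641791981,
   11184853443911547531502623,
   105743073469461145540302177695413980055736590932308480918567716897,
   672692759618691487837347377653222023,
   823792778916203885174272578952601916959525662211365765340492728, 5261435924263444711,
   576460752387310395,
   32571273769878028330797997965056822208934799033617703846879956568461162084252,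
   31697274347377109157008846127682913992198164066923248537357329815552032556158,
   15844213155480429627628270292102609482257095114874546039493543416075141016245,
   16314207723458741158752383800293828365750510660807284190461392396243158783669,
   118920265462210145754658164041141389768488982176886897907004604620, 4637167757675756216,
   4102564884037248539240991097747241999502896059938042514442858326359900044408, 73830,
   2337820671564, 12648542438486885122569226545727137898, 22401726286945707558242055, 537012633,
   14823965143737633346533085857779275703914541126847596970743310274333761578063, 8397545,
   133704908257293316906012289212257232693895911495431428344707020927,
   853624832876680814098991742499126620142619689681314848774609188, 1082172,
   37217207682902610850178997987143037917807945977633203976338440682253811338655,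
   3902748925488418438365846041062938712385261382785154297365200192582875881600, 134768217,
   139138441270968551594554934914754960482558231224638878568408521331, 682,
   57171512879380228908417842592777416566540539426039156787, 4776549873569269811,
   11680072508727880649850121697179732035,
   14936956171087357584959321971338040696370945952577048365003021947246605386162,
   31712330663620472903114504212663429526356803567563662024947118913361997218944,
   61503766882810868132776155844675521523145106496258589894,
   36540263847056954619896736179281831091518010705793295146725044161175132848591,
   36209870391143936187353907253349078405519951885996959610466480144208236069551,
   45338813324533063,
   29351640040275852236051336902124336720153272797613416284967463671109527299897,
   737946751053533849091, 34359738550, 671113456,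
   40286016342212558471604348152525706563431064900550581968343427562623534874739,
   802363184651935823,
   16682634698451206819584739271705063973923560399675952972017239937649981107530,
   24259463454819267098331128, 13999741697691090323297151564093115673,
   22004015555590024493473996, 1050671,
   16403432413989704619336869102060213276827218628947878070429928256133465640063,
   4779491873648189586, 134219082,
   21966165345526691452714831313017848915646440159799038108594573111009381020970,
   32684317342190394791914537691216816209227075597129933272318678513351660994624,
   690582011417888015459389141660633677, 29102746853371426870755408,
   32709976420056299547948962523798721629923817243362871149769597532491262229893,
   50579462689380439628111905356702933173646771159120086661,
   17471044173276069947874167488496417883105226812482840592679984129917472347434, 545259558,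
   164583634365085826661521024938760368446829926127264853104952641823,
   16710732234571026826495499268522227391,
   105441059852560994692992111222949256629752391266121312400120545453,
   15378645776048778499726024531435946991739218472702684756145076291775298147154,
   696515508505252786, 1180841514431786, 14507112971642120788526634, 29243404127108030137455820,
   1577141, 16848753286866587481339107729484487699358899201815278281213788451263336744711,
   43649311532330817624560367113048109216538636934667863981663427079630152606171, 12669923,
   885806440198976091807, 162905374939038824998423568774327087808107366676189807894796853135,
   1696727203108650,
   16293974076256786133411877909169104405053334891450605826413871131297003569134,
   16122125226017942304645112096317768885, 3308572764024, 2542956194457, 24579,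
   29092181796110860431399978,
   4079761919695905258492341670729470407054934115674103974792295642558982381632,
   15113071979150846662371554436456460419754575180031669660130905757868467906642,
   30916795627897159561805645709232658451697324669836028504104089173679714493683,
   107431511593230215788915716431953669438511429656682471061352820570, 2275, 8082045434813091858,
   25330481082139318693041545339187640660667544236816046610535572685868223566372,
   63816743257557125,
   31776976107712664502637557079538434019207258680020512520990277872722959978591, 17546,
   18721597771550085524559625170701931123,
   52895074404270295901673244594417404469001161357989122133, 71423,
   6332878983032780173565952009036547725445344661747419133981817927337767150011, 3851349939964,
   21188394247384437197483282, 884770075812013674204671614713067087027672297460308005750556144,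
   105495342869511249870799774942398568392370249246865891974640339082,
   50194566379860332294296156383750431221752878821755875724,
   3807263233501766871989791085306520612904951961313631064391662244186508821165,
   29430438366051671536846886157387613065015030315074192277843036793542163178303,
   14990085185689939722625212279715660478058815208230218182620805178727113982829,
   109703620441916642751055817525349478837374299603919368855019210788, 556426989, 549755895810,
   9717968676970739184259225, 1135539459788998,
   34955347224631799883060903558781583175422306057653638834683604138818420838647,
   836042125272343790836375431120312504822843200519168824473308296, 19449529890264364478141258,
   3652516064971265234739653277008468068900876385562453271458754354985296012329,
   14545295991206116736365849013444452737553064087981543890710495085147821615253, 511]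

theorem exists_mem_littlewoodMultiples_bitSum_dvd_bitSum :
    ∀ m < 2 ^ 8, ∃ n ∈ littlewoodMultiples[m]?,
      bitSum 0 (2 ^ (n.log2 + 1 + 1)) 9 (2 * m + 1) ∣
        bitSum (-1 : ℤ) (2 ^ (n.log2 + 1 + 1)) (n.log2 + 1) n := by
  decide +kernel

theorem newman_deg_le_8_has_littlewood_multiple
    (P : Polynomial ℤ) (hP : IsNewman P) (hdeg : P.natDegree ≤ 8) :
    ∃ L : Polynomial ℤ, IsLittlewood L ∧ P ∣ L := by
  obtain ⟨m, hm, hPm⟩ := hP.exists_eq_bitSum hdeg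
  obtain ⟨n, -, hdvd⟩ := exists_mem_littlewoodMultiples_bitSum_dvd_bitSum m hm
  rw [← eval_bitSum _ 0, ← hPm] at hdvd
  exact ⟨_, isLittlewood_bitSum (Nat.succ_pos _) n, hP.dvd_bitSum hdvd⟩
end

section
/- Each of the nine polynomials P₁ = X^6+X^5−X^4−X^3−X^2+X+1, P₂ = X^7+X^6−X^5+X^4+X^3−X^2+X+1, P₃ = X^8+X^7−X^6−X^5+X^4−X^3−X^2+X+1, P₄ = X^9+X^8+X^7−X^6−X^5−X^4−X^3+X^2+X+1, P₅ = X^10−X^9+X^8+X^7−X^6+X^5−X^4+X^3+X^2−X+1, P₆ = X^10+X^9+X^8−X^7−X^6−X^5−X^4−X^3+X^2+X+1, P₇ = X^12+X^11−X^10−X^9−X^8+X^7+X^6+X^5−X^4−X^3−X^2+X+1, P₈ = X^12−X^11+X^10+X^9−X^8+X^7+X^6+X^5−X^4+X^3+X^2−X+1, P₉ = X^12+X^11+X^10−X^9−X^8−X^7+X^6−X^5−X^4−X^3+X^2+X+1 divides some Newman polynomial and is not a product of cyclotomic polynomials. -/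
/-!
If a product `P` of cyclotomic polynomials has a root in some domain, this is a root of a factor
`Φ_n`, so its multiplicative order `d` divides `n` and `φ(d) ≤ φ(n) ≤ deg P`. Modulo the prime
`19013 = 196 * 97 + 1` each of the nine polynomials has a root whose order is divisible by the
prime `97`, and `φ(97) = 96` exceeds their degrees. The Newman multiples are explicit.
-/

open Polynomial

set_option maxHeartbeats 1000000

theorem isNewman_sum_X_pow {s : Finset ℕ} (hs : 0 ∈ s) : IsNewman (∑ k ∈ s, (X : ℤ[X]) ^ k) := by
  have coeff_sum (i : ℕ) : (∑ k ∈ s, (X : ℤ[X]) ^ k).coeff i = if i ∈ s then 1 else 0 := by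
    simp [coeff_X_pow]
  refine ⟨by rw [coeff_sum, if_pos hs], fun i => ?_⟩
  rw [coeff_sum]
  exact (ite_eq_or_eq (i ∈ s) 1 0).symm

theorem IsCyclotomicProduct.exists_pow_eq_one_of_aeval_eq_zero {R : Type*} [CommRing R] [IsDomain R]
    {P : ℤ[X]} (hP : IsCyclotomicProduct P) {a : R} (ha : aeval a P = 0) :
    ∃ n, 0 < n ∧ a ^ n = 1 ∧ n.totient ≤ P.natDegree := by
  obtain ⟨l, hl, rfl⟩ := hP
  obtain ⟨n, hn, hroot⟩ : ∃ n ∈ l, aeval a (cyclotomic n ℤ) = 0 := by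
    simpa [map_list_prod, List.prod_eq_zero_iff] using ha
  have hpow : a ^ n = 1 := by
    simpa [sub_eq_zero] using
      aeval_eq_zero_of_dvd_aeval_eq_zero (cyclotomic.dvd_X_pow_sub_one n ℤ) hroot
  have hprod : (l.map fun n => cyclotomic n ℤ).prod ≠ 0 := by
    simp [List.prod_eq_zero_iff, cyclotomic_ne_zero]
  refine ⟨n, hl n hn, hpow, ?_⟩
  rw [← natDegree_cyclotomic n ℤ]
  exact natDegree_le_of_dvd (List.dvd_prod (List.mem_map_of_mem hn)) hprod

theorem IsCyclotomicProduct.totient_le_natDegree_of_dvd_orderOf {R : Type*} [CommRing R]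
    [IsDomain R] {P : ℤ[X]} (hP : IsCyclotomicProduct P) {a : R} (ha : aeval a P = 0) {d : ℕ}
    (hd : d ∣ orderOf a) : d.totient ≤ P.natDegree := by
  obtain ⟨n, hn, hpow, hle⟩ := hP.exists_pow_eq_one_of_aeval_eq_zero ha
  have hdn : d ∣ n := hd.trans (orderOf_dvd_of_pow_eq_one hpow)
  exact (Nat.le_of_dvd (Nat.totient_pos.mpr hn) (Nat.totient_dvd_of_dvd hdn)).trans hle

theorem prime_dvd_orderOf_of_pow_ne_one {G : Type*} [Monoid G] {a : G} {m q : ℕ} (hq : q.Prime)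
    (hmq : a ^ (m * q) = 1) (hm : a ^ m ≠ 1) : q ∣ orderOf a := by
  by_contra hdvd
  have hcoprime : (orderOf a).Coprime q := (hq.coprime_iff_not_dvd.mpr hdvd).symm
  exact hm (orderOf_dvd_iff_pow_eq_one.mp
    (hcoprime.dvd_of_dvd_mul_right (orderOf_dvd_of_pow_eq_one hmq)))

/-- The Littlewood polynomials `P₁, …, P₉`, indexed from `0`. -/
noncomputable def littlewood : Fin 9 → ℤ[X]
  | 0 => X ^ 6 + X ^ 5 - X ^ 4 - X ^ 3 - X ^ 2 + X + 1
  | 1 => X ^ 7 + X ^ 6 - X ^ 5 + X ^ 4 + X ^ 3 - X ^ 2 + X + 1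
  | 2 => X ^ 8 + X ^ 7 - X ^ 6 - X ^ 5 + X ^ 4 - X ^ 3 - X ^ 2 + X + 1
  | 3 => X ^ 9 + X ^ 8 + X ^ 7 - X ^ 6 - X ^ 5 - X ^ 4 - X ^ 3 + X ^ 2 + X + 1
  | 4 => X ^ 10 - X ^ 9 + X ^ 8 + X ^ 7 - X ^ 6 + X ^ 5 - X ^ 4 + X ^ 3 + X ^ 2 - X + 1
  | 5 => X ^ 10 + X ^ 9 + X ^ 8 - X ^ 7 - X ^ 6 - X ^ 5 - X ^ 4 - X ^ 3 + X ^ 2 + X + 1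
  | 6 =>
    X ^ 12 + X ^ 11 - X ^ 10 - X ^ 9 - X ^ 8 + X ^ 7 + X ^ 6 + X ^ 5 - X ^ 4 - X ^ 3 -
      X ^ 2 + X + 1
  | 7 =>
    X ^ 12 - X ^ 11 + X ^ 10 + X ^ 9 - X ^ 8 + X ^ 7 + X ^ 6 + X ^ 5 - X ^ 4 + X ^ 3 +
      X ^ 2 - X + 1
  | 8 =>
    X ^ 12 + X ^ 11 + X ^ 10 - X ^ 9 - X ^ 8 - X ^ 7 + X ^ 6 - X ^ 5 - X ^ 4 - X ^ 3 +
      X ^ 2 + X + 1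

/-- The exponents of a Newman polynomial divisible by the corresponding `littlewood` polynomial. -/
def newmanExponents : Fin 9 → Finset ℕ
  | 0 => {0, 1, 3, 5, 6, 7, 11, 12, 13, 15, 17, 18}
  | 1 => {0, 1, 3, 5, 7, 8, 11, 12, 14, 16, 18, 19}
  | 2 => {0, 1, 4, 6, 13, 15, 18, 19}
  | 3 => {0, 1, 2, 4, 5, 8, 10, 11, 13, 16, 17, 19, 20, 21}
  | 4 => {0, 2, 3, 4, 9, 10, 14, 15, 20, 21, 22, 24}
  | 5 => {0, 1, 2, 5, 8, 10, 11, 13, 14, 21, 22, 24, 25, 27, 30, 33, 34, 35}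
  | 6 => {0, 1, 3, 5, 7, 9, 11, 16, 18, 20, 22, 24, 26, 27}
  | 7 => {0, 2, 3, 5, 7, 8, 12, 15, 16, 17, 19, 25, 26, 28, 29, 33, 34, 36, 37, 43, 45, 46, 47, 50,
      54, 55, 57, 59, 60, 62}
  | 8 => {0, 1, 2, 6, 9, 12, 13, 15, 16, 25, 26, 28, 29, 32, 35, 39, 40, 41}

/-- The quotients of the Newman polynomials with exponents `newmanExponents` by the `littlewood`
polynomials. -/
noncomputable def newmanCofactor : Fin 9 → ℤ[X]
  | 0 => X ^ 12 + X ^ 10 + X ^ 9 + X ^ 8 + X ^ 7 + 2 * X ^ 6 + X ^ 5 + X ^ 4 + X ^ 3 + X ^ 2 + 1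
  | 1 => X ^ 12 + X ^ 10 - X ^ 9 + X ^ 8 - X ^ 7 + X ^ 6 - X ^ 5 + X ^ 4 - X ^ 3 + X ^ 2 + 1
  | 2 => X ^ 11 + X ^ 9 + X ^ 7 + X ^ 6 + X ^ 5 + X ^ 4 + X ^ 2 + 1
  | 3 => X ^ 12 + X ^ 9 + X ^ 8 + X ^ 6 + X ^ 4 + X ^ 3 + 1
  | 4 => X ^ 14 + X ^ 13 + X ^ 12 - X ^ 9 - X ^ 5 + X ^ 2 + X + 1
  | 5 =>
    X ^ 25 + X ^ 22 + X ^ 20 + X ^ 19 + X ^ 17 + X ^ 16 + X ^ 15 + X ^ 14 + X ^ 13 + X ^ 12 +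
      X ^ 11 + X ^ 10 + X ^ 9 + X ^ 8 + X ^ 6 + X ^ 5 + X ^ 3 + 1
  | 6 =>
    X ^ 15 + X ^ 13 + X ^ 12 + X ^ 11 + X ^ 10 + X ^ 9 + X ^ 8 + X ^ 7 + X ^ 6 + X ^ 5 + X ^ 4 +
      X ^ 3 + X ^ 2 + 1
  | 7 =>
    X ^ 50 + X ^ 49 + X ^ 48 - X ^ 46 - X ^ 45 - X ^ 44 - X ^ 43 + X ^ 41 + 2 * X ^ 40 +
      2 * X ^ 39 + X ^ 38 - X ^ 36 - 2 * X ^ 35 - 2 * X ^ 34 - X ^ 33 + 2 * X ^ 31 + 2 * X ^ 30 +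
      2 * X ^ 29 + X ^ 28 - 2 * X ^ 26 - 2 * X ^ 25 - 2 * X ^ 24 + X ^ 22 + 2 * X ^ 21 +
      2 * X ^ 20 + 2 * X ^ 19 - X ^ 17 - 2 * X ^ 16 - 2 * X ^ 15 - X ^ 14 + X ^ 12 + 2 * X ^ 11 +
      2 * X ^ 10 + X ^ 9 - X ^ 7 - X ^ 6 - X ^ 5 - X ^ 4 + X ^ 2 + X + 1
  | 8 =>
    X ^ 29 + X ^ 26 + X ^ 23 + X ^ 22 + X ^ 20 + X ^ 19 + X ^ 17 + X ^ 16 + X ^ 15 + X ^ 14 +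
      X ^ 13 + X ^ 12 + X ^ 10 + X ^ 9 + X ^ 7 + X ^ 6 + X ^ 3 + 1

/-- Roots of the `littlewood` polynomials modulo the prime `19013`, found by a computer search for
a prime at which all nine have a root of large order. -/
def littlewoodRoot : Fin 9 → ZMod 19013 :=
  ![10329, 4354, 754, 5664, 84, 606, 8275, 4813, 2307]

theorem zero_mem_newmanExponents (i : Fin 9) : 0 ∈ newmanExponents i := by
  decide +revert

theorem littlewood_mul_newmanCofactor (i : Fin 9) :
    littlewood i * newmanCofactor i = ∑ k ∈ newmanExponents i, X ^ k := by
  fin_cases i <;>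
    simp +decide only [littlewood, newmanCofactor, newmanExponents, Finset.sum_insert,
      Finset.sum_singleton, Finset.mem_insert, Finset.mem_singleton] <;>
    ring

theorem natDegree_littlewood_le (i : Fin 9) : (littlewood i).natDegree ≤ 12 := by
  fin_cases i <;> simp only [littlewood] <;> compute_degree!

theorem aeval_littlewoodRoot_littlewood (i : Fin 9) :
    aeval (littlewoodRoot i) (littlewood i) = 0 := by
  fin_cases i <;>
    simp only [littlewood, littlewoodRoot, Fin.reduceFinMk, Matrix.cons_val, map_add, map_sub,
      map_pow, aeval_X, map_one] <;>
    decide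

theorem littlewoodRoot_pow_ne_one (i : Fin 9) : littlewoodRoot i ^ 196 ≠ 1 := by
  -- Splitting the exponent keeps `decide` within the default recursion depth.
  rw [show 196 = 14 * 14 from rfl, pow_mul]
  decide +revert

instance fact_prime_19013 : Fact (Nat.Prime 19013) := ⟨by norm_num⟩

theorem dvd_orderOf_littlewoodRoot (i : Fin 9) : 97 ∣ orderOf (littlewoodRoot i) := by
  have hne_zero : littlewoodRoot i ≠ 0 := by decide +revert
  have hfermat : littlewoodRoot i ^ (196 * 97) = 1 := ZMod.pow_card_sub_one_eq_one hne_zero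
  exact prime_dvd_orderOf_of_pow_ne_one (by norm_num) hfermat (littlewoodRoot_pow_ne_one i)

theorem not_isCyclotomicProduct_littlewood (i : Fin 9) :
    ¬ IsCyclotomicProduct (littlewood i) := by
  intro hcyc
  have htotient : Nat.totient 97 ≤ (littlewood i).natDegree :=
    hcyc.totient_le_natDegree_of_dvd_orderOf (aeval_littlewoodRoot_littlewood i)
      (dvd_orderOf_littlewoodRoot i)
  rw [Nat.totient_prime (by norm_num)] at htotient
  have hdegree := natDegree_littlewood_le i
  omega

theorem nine_littlewood_polynomials_with_newman_multiples
    (P : Polynomial ℤ)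
    (hP : P ∈ ([X ^ 6 + X ^ 5 - X ^ 4 - X ^ 3 - X ^ 2 + X + 1,
        X ^ 7 + X ^ 6 - X ^ 5 + X ^ 4 + X ^ 3 - X ^ 2 + X + 1,
        X ^ 8 + X ^ 7 - X ^ 6 - X ^ 5 + X ^ 4 - X ^ 3 - X ^ 2 + X + 1,
        X ^ 9 + X ^ 8 + X ^ 7 - X ^ 6 - X ^ 5 - X ^ 4 - X ^ 3 + X ^ 2 + X + 1,
        X ^ 10 - X ^ 9 + X ^ 8 + X ^ 7 - X ^ 6 + X ^ 5 - X ^ 4 + X ^ 3 + X ^ 2 - X + 1,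
        X ^ 10 + X ^ 9 + X ^ 8 - X ^ 7 - X ^ 6 - X ^ 5 - X ^ 4 - X ^ 3 + X ^ 2 + X + 1,
        X ^ 12 + X ^ 11 - X ^ 10 - X ^ 9 - X ^ 8 + X ^ 7 + X ^ 6 + X ^ 5 - X ^ 4 - X ^ 3 - X ^ 2 + X + 1,
        X ^ 12 - X ^ 11 + X ^ 10 + X ^ 9 - X ^ 8 + X ^ 7 + X ^ 6 + X ^ 5 - X ^ 4 + X ^ 3 + X ^ 2 - X + 1,
        X ^ 12 + X ^ 11 + X ^ 10 - X ^ 9 - X ^ 8 - X ^ 7 + X ^ 6 - X ^ 5 - X ^ 4 - X ^ 3 + X ^ 2 + X + 1]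
        : List (Polynomial ℤ))) :
    (∃ N : Polynomial ℤ, IsNewman N ∧ P ∣ N) ∧ ¬ IsCyclotomicProduct P := by
  obtain ⟨i, rfl⟩ : ∃ i, littlewood i = P := by
    simpa [Fin.exists_fin_succ, littlewood, eq_comm] using hP
  exact ⟨⟨∑ k ∈ newmanExponents i, X ^ k, isNewman_sum_X_pow (zero_mem_newmanExponents i),
    Dvd.intro _ (littlewood_mul_newmanCofactor i)⟩, not_isCyclotomicProduct_littlewood i⟩
end
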